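/- arXiv:2506.12789 — 6 statements merged into one kernel-verified Lean document; each statement's English description precedes it below -/
import Mathlib

section
/- Let e be an odd integer with e ≥ 3 and let n be a positive integer. Then ν₂(∑_{k=0}^{n} binom(n, k)^e) ≥ s₂(n), with equality if and only if the binary expansion of n does not contain two adjacent 1s, i.e., for every i, n does not have both bit i and bit i+1 equal to 1. -/
/-- `s2 n` is the number of ones in the binary expansion of `n`. -/
def s2 (n : ℕ) : ℕ := (Nat.digits 2 n).sum

/-! Both claims hold for the weighted sums `∑_{k + l = n} (n choose k) ^ e * g k l` over `ℤ_[2]`,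
where `g` is Lipschitz for the `2`-adic distance along antidiagonals (and symmetric with `g 0 n` a
unit, for the equality case). Separating `k` by parity reduces the sum for `n` to sums for `n / 2`
and `n / 2 - 1`: up to a unit depending only on `n`, `(2k+s + 2l+t choose 2k+s)` is `(k+l choose k)`
times the unit `1 / (D (k+s) * D (l+t))`, where `D m = 1 * 3 * ⋯ * (2m-1)`; if `s = t = 1` there is
a further factor `2 (k+l+1)`, which makes that part negligible.

These units are slightly better than Lipschitz: moving `2 ^ j` from `l` to `k` multiplies them,
modulo `2 ^ (j + 2)`, by a power of `1 + 2 ^ (j + 1)` that depends on `k + l` only. Hence for odd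
`n` the two parity classes add up to *twice* a Lipschitz weight, and each binary digit `1` of `n`
contributes a factor `2`. The contribution is exact as long as the new weight is a unit at `k = 0`,
and this fails precisely when `n / 2` is odd as well.
-/

open Finset
open scoped Nat

namespace BinomialPowerSum

section BinaryExpansion

lemma s2_two_mul (n : ℕ) : s2 (2 * n) = s2 n := by
  rcases n.eq_zero_or_pos with rfl | hn
  · rfl
  · simp [s2, Nat.digits_base_mul one_lt_two hn]

lemma s2_two_mul_add_one (n : ℕ) : s2 (2 * n + 1) = s2 n + 1 := by
  rw [s2, add_comm, Nat.digits_add 2 one_lt_two 1 n one_lt_two (.inl one_ne_zero), List.sum_cons,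
    add_comm, s2]

lemma s2_succ_le (n : ℕ) : s2 (n + 1) ≤ s2 n + 1 := by
  induction n using Nat.evenOddRec with
  | h0 => simp [s2]
  | h_even m _ => rw [s2_two_mul_add_one, s2_two_mul]
  | h_odd m ih =>
    rw [show 2 * m + 1 + 1 = 2 * (m + 1) by ring, s2_two_mul, s2_two_mul_add_one]
    exact ih.trans (Nat.le_succ _)

/-- The binary expansion of `n` does not contain two adjacent ones. -/
def NoAdjacentOnes (n : ℕ) : Prop :=
  ∀ i : ℕ, ¬(n.testBit i = true ∧ n.testBit (i + 1) = true)

lemma noAdjacentOnes_two_mul {n : ℕ} : NoAdjacentOnes (2 * n) ↔ NoAdjacentOnes n := by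
  rw [NoAdjacentOnes, ← Nat.and_forall_add_one]
  simp [NoAdjacentOnes, Nat.testBit_succ]

lemma noAdjacentOnes_two_mul_add_one {n : ℕ} :
    NoAdjacentOnes (2 * n + 1) ↔ Even n ∧ NoAdjacentOnes n := by
  have hhalf : (2 * n + 1) / 2 = n := by omega
  rw [NoAdjacentOnes, ← Nat.and_forall_add_one]
  simp [NoAdjacentOnes, Nat.testBit_succ, hhalf, Nat.even_iff]

end BinaryExpansion

section SumAntidiagonal

variable {M : Type*} [AddCommMonoid M]

lemma sum_antidiagonal_two_mul_add_one (n : ℕ) (f : ℕ → ℕ → M) :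
    ∑ p ∈ antidiagonal (2 * n + 1), f p.1 p.2 =
      ∑ p ∈ antidiagonal n, f (2 * p.1) (2 * p.2 + 1) +
        ∑ p ∈ antidiagonal n, f (2 * p.1 + 1) (2 * p.2) := by
  induction n generalizing f with
  | zero => simp [Nat.sum_antidiagonal_succ]
  | succ n ih =>
    rw [show 2 * (n + 1) + 1 = 2 * n + 1 + 1 + 1 by ring, Nat.sum_antidiagonal_succ,
      Nat.sum_antidiagonal_succ, ih fun k l ↦ f (k + 1 + 1) l, Nat.sum_antidiagonal_succ,
      Nat.sum_antidiagonal_succ, ← add_assoc, ← add_assoc, add_add_add_comm]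
    simp only [mul_add, mul_one, mul_zero, zero_add, add_assoc, Nat.reduceAdd]

lemma sum_antidiagonal_two_mul_succ (n : ℕ) (f : ℕ → ℕ → M) :
    ∑ p ∈ antidiagonal (2 * (n + 1)), f p.1 p.2 =
      ∑ p ∈ antidiagonal (n + 1), f (2 * p.1) (2 * p.2) +
        ∑ p ∈ antidiagonal n, f (2 * p.1 + 1) (2 * p.2 + 1) := by
  rw [show 2 * (n + 1) = 2 * n + 1 + 1 by ring, Nat.sum_antidiagonal_succ,
    sum_antidiagonal_two_mul_add_one n fun k l ↦ f (k + 1) l, Nat.sum_antidiagonal_succ]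
  simp only [mul_add, mul_one, mul_zero, add_assoc, Nat.reduceAdd]
  rw [add_comm (∑ p ∈ antidiagonal n, f (2 * p.1 + 1) (2 * p.2 + 1))]

end SumAntidiagonal

lemma dvd_one_add_pow_sub_one {R : Type*} [CommRing R] (x : R) (n : ℕ) : x ∣ (1 + x) ^ n - 1 := by
  simpa using sub_one_dvd_pow_sub_one (1 + x) n

lemma four_dvd_two_mul_add_one_pow_sub {R : Type*} [CommRing R] {e : ℕ} (he : Odd e) (x : R) :
    4 ∣ (2 * x + 1) ^ e - (2 * x + 1) := by
  obtain ⟨i, rfl⟩ := he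
  have hsq : 4 ∣ ((2 * x + 1) ^ 2) ^ i - 1 :=
    .trans ⟨x ^ 2 + x, by ring⟩ (sub_one_dvd_pow_sub_one _ i)
  convert hsq.mul_right (2 * x + 1) using 1
  rw [pow_succ, pow_mul]
  ring

section TwoAdic

lemma prime_two : Prime (2 : ℤ_[2]) := mod_cast PadicInt.prime_p (p := 2)

lemma isUnit_two_mul_add_one (x : ℤ_[2]) : IsUnit (2 * x + 1) := by
  have h : -(2 * x) ∈ nonunits ℤ_[2] := fun h ↦
    prime_two.not_isUnit (isUnit_of_mul_isUnit_left (IsUnit.neg_iff _ |>.1 h))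
  simpa [add_comm] using IsLocalRing.isUnit_one_sub_self_of_mem_nonunits _ h

lemma pow_dvd_natCast_iff {p : ℕ} [Fact p.Prime] {t x : ℕ} :
    (p : ℤ_[p]) ^ t ∣ (x : ℤ_[p]) ↔ p ^ t ∣ x := by
  simpa [← Int.natCast_dvd_natCast] using PadicInt.pow_p_dvd_int_iff (p := p) t x

end TwoAdic

section OddFactorial

/-- The product `1 * 3 * ⋯ * (2 * n - 1)` of the first `n` odd numbers, as a `2`-adic integer. -/
noncomputable def oddFactorial (n : ℕ) : ℤ_[2] := ∏ i ∈ range n, (2 * (i : ℤ_[2]) + 1)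

lemma oddFactorial_zero : oddFactorial 0 = 1 := rfl

lemma oddFactorial_succ (n : ℕ) : oddFactorial (n + 1) = oddFactorial n * (2 * n + 1) :=
  prod_range_succ _ _

lemma isUnit_oddFactorial (n : ℕ) : IsUnit (oddFactorial n) :=
  IsUnit.prod_iff.2 fun i _ ↦ isUnit_two_mul_add_one i

lemma factorial_two_mul (n : ℕ) : ((2 * n)! : ℤ_[2]) = 2 ^ n * n ! * oddFactorial n := by
  induction n with
  | zero => simp [oddFactorial_zero]
  | succ n ih =>
    rw [show 2 * (n + 1) = 2 * n + 1 + 1 by ring, oddFactorial_succ]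
    simp only [Nat.factorial_succ]
    push_cast
    rw [ih]
    ring

lemma factorial_two_mul_add {s : ℕ} (hs : s ≤ 1) (n : ℕ) :
    ((2 * n + s)! : ℤ_[2]) = 2 ^ n * n ! * oddFactorial (n + s) := by
  interval_cases s
  · exact factorial_two_mul n
  · rw [Nat.factorial_succ, Nat.cast_mul, factorial_two_mul, oddFactorial_succ]
    push_cast
    ring

lemma oddFactorial_add_two_pow_congr (j k : ℕ) :
    (2 : ℤ_[2]) ^ (j + 2) ∣ oddFactorial (k + 2 ^ j) -
      oddFactorial (2 ^ j) * (1 + 2 ^ (j + 1)) ^ k * oddFactorial k := by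
  induction k with
  | zero => simp [oddFactorial_zero]
  | succ k ih =>
    obtain ⟨c, hc⟩ := ih
    rw [add_right_comm, oddFactorial_succ, oddFactorial_succ]
    refine ⟨c * (2 * k + 1 + 2 ^ (j + 1)) -
      oddFactorial (2 ^ j) * (1 + 2 ^ (j + 1)) ^ k * oddFactorial k * k, ?_⟩
    push_cast
    linear_combination (2 * k + 1 + 2 ^ (j + 1) : ℤ_[2]) * hc

end OddFactorial

section Weight

/-- The `2`-adic unit `1 / (oddFactorial k * oddFactorial l)` by which binomial coefficients change
when both lower indices are doubled. -/
noncomputable def weight (k l : ℕ) : ℤ_[2] := Ring.inverse (oddFactorial k * oddFactorial l)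

lemma weight_mul_cancel (k l : ℕ) : weight k l * (oddFactorial k * oddFactorial l) = 1 :=
  Ring.inverse_mul_cancel _ ((isUnit_oddFactorial k).mul (isUnit_oddFactorial l))

lemma isUnit_weight (k l : ℕ) : IsUnit (weight k l) := .of_mul_eq_one _ (weight_mul_cancel k l)

lemma weight_comm (k l : ℕ) : weight k l = weight l k := by
  rw [weight, weight, mul_comm]

lemma weight_one_left (l : ℕ) : weight 1 l = (2 * l + 1) * weight 0 (l + 1) := by
  have h₁ := weight_mul_cancel 1 l
  have h₀ := weight_mul_cancel 0 (l + 1)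
  simp only [oddFactorial_succ, oddFactorial_zero, Nat.cast_zero] at h₁ h₀
  linear_combination (2 * l + 1) * weight 0 (l + 1) * h₁ - weight 1 l * h₀

lemma add_choose_mul_factorial_mul_factorial_cast (k l : ℕ) :
    ((k + l).choose k * (k ! * l !) : ℤ_[2]) = (k + l)! := by
  rw [Nat.choose_symm_add, ← mul_assoc]
  exact mod_cast Nat.add_choose_mul_factorial_mul_factorial k l

lemma choose_two_mul_add_mul {s t : ℕ} (hs : s ≤ 1) (ht : t ≤ 1) (k l : ℕ) :
    ((2 * k + s + (2 * l + t)).choose (2 * k + s) * (2 ^ (k + l) * (k ! * l !)) : ℤ_[2]) =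
      (2 * (k + l) + (s + t))! * weight (k + s) (l + t) := by
  have h := add_choose_mul_factorial_mul_factorial_cast (2 * k + s) (2 * l + t)
  rw [factorial_two_mul_add hs, factorial_two_mul_add ht,
    show 2 * k + s + (2 * l + t) = 2 * (k + l) + (s + t) by ring] at h
  rw [show 2 * k + s + (2 * l + t) = 2 * (k + l) + (s + t) by ring, ← h, pow_add]
  linear_combination -(2 * (k + l) + (s + t)).choose (2 * k + s) * (2 ^ k * 2 ^ l * (k ! * l !)) *
    weight_mul_cancel (k + s) (l + t)

lemma choose_two_mul_add {s t : ℕ} (h : s + t ≤ 1) (k l : ℕ) :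
    ((2 * k + s + (2 * l + t)).choose (2 * k + s) : ℤ_[2]) =
      (k + l).choose k * (oddFactorial (k + l + (s + t)) * weight (k + s) (l + t)) := by
  have hne : (2 ^ (k + l) * (k ! * l !) : ℤ_[2]) ≠ 0 := mod_cast by positivity
  refine mul_right_cancel₀ hne ?_
  rw [choose_two_mul_add_mul (by omega) (by omega), factorial_two_mul_add h,
    ← add_choose_mul_factorial_mul_factorial_cast]
  ring

lemma choose_two_mul_add_one_add_one (k l : ℕ) :
    ((2 * k + 1 + (2 * l + 1)).choose (2 * k + 1) : ℤ_[2]) =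
      (k + l).choose k *
        (2 * (k + l + 1) * (oddFactorial (k + l + 1) * weight (k + 1) (l + 1))) := by
  have hne : (2 ^ (k + l) * (k ! * l !) : ℤ_[2]) ≠ 0 := mod_cast by positivity
  refine mul_right_cancel₀ hne ?_
  rw [choose_two_mul_add_mul le_rfl le_rfl, show 2 * (k + l) + (1 + 1) = 2 * (k + l + 1) by ring,
    factorial_two_mul, Nat.factorial_succ, Nat.cast_mul,
    ← add_choose_mul_factorial_mul_factorial_cast]
  push_cast
  ring

lemma weight_congr (j k l : ℕ) :
    (2 : ℤ_[2]) ^ (j + 2) ∣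
      weight (k + 2 ^ j) l - (1 + 2 ^ (j + 1)) ^ (k + l) * weight k (l + 2 ^ j) := by
  set u : ℤ_[2] := 1 + 2 ^ (j + 1)
  have husq : (2 : ℤ_[2]) ^ (j + 2) ∣ u ^ (2 * k) - 1 := by
    rw [pow_mul]
    exact .trans ⟨1 + 2 ^ j, by ring⟩ (sub_one_dvd_pow_sub_one (u ^ 2) k)
  obtain ⟨a, ha⟩ := oddFactorial_add_two_pow_congr j k
  obtain ⟨b, hb⟩ := oddFactorial_add_two_pow_congr j l
  obtain ⟨c, hc⟩ := husq
  have hcross : (2 : ℤ_[2]) ^ (j + 2) ∣ oddFactorial k * oddFactorial (l + 2 ^ j) -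
      u ^ (k + l) * (oddFactorial (k + 2 ^ j) * oddFactorial l) := by
    refine ⟨oddFactorial k * b - u ^ (k + l) * oddFactorial l * a -
      oddFactorial (2 ^ j) * u ^ l * oddFactorial k * oddFactorial l * c, ?_⟩
    linear_combination oddFactorial k * hb - u ^ (k + l) * oddFactorial l * ha -
      oddFactorial (2 ^ j) * u ^ l * oddFactorial k * oddFactorial l * hc
  convert hcross.mul_left (weight (k + 2 ^ j) l * weight k (l + 2 ^ j)) using 1
  linear_combination u ^ (k + l) * weight k (l + 2 ^ j) * weight_mul_cancel (k + 2 ^ j) l -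
    weight (k + 2 ^ j) l * weight_mul_cancel k (l + 2 ^ j)

lemma weight_pow_congr (e j k l : ℕ) :
    (2 : ℤ_[2]) ^ (j + 2) ∣
      weight (k + 2 ^ j) l ^ e - (1 + 2 ^ (j + 1)) ^ ((k + l) * e) * weight k (l + 2 ^ j) ^ e := by
  rw [pow_mul, ← mul_pow]
  exact (weight_congr j k l).trans (sub_dvd_pow_sub_pow _ _ e)

end Weight

section AntidiagonalLipschitz

/-- Along every antidiagonal `k + l = n`, the function `g` is Lipschitz with constant `1 / 2` for
the `2`-adic distance. It suffices to require this for steps by powers of two. -/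
def AntidiagonalLipschitz (g : ℕ → ℕ → ℤ_[2]) : Prop :=
  ∀ j k l : ℕ, 2 ^ (j + 1) ∣ g (k + 2 ^ j) l - g k (l + 2 ^ j)

variable {g : ℕ → ℕ → ℤ_[2]}

lemma antidiagonalLipschitz_one : AntidiagonalLipschitz 1 := fun j k l ↦ by simp

lemma antidiagonalLipschitz_of_congr (N : ℕ → ℕ → ℕ)
    (h : ∀ j k l, 2 ^ (j + 2) ∣ g (k + 2 ^ j) l - (1 + 2 ^ (j + 1)) ^ N k l * g k (l + 2 ^ j)) :
    AntidiagonalLipschitz g := fun j k l ↦ by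
  convert dvd_add ((pow_dvd_pow 2 (Nat.le_succ _)).trans (h j k l))
    ((dvd_one_add_pow_sub_one (2 ^ (j + 1)) (N k l)).mul_right (g k (l + 2 ^ j))) using 1
  ring

lemma antidiagonalLipschitz_weight_pow (e : ℕ) :
    AntidiagonalLipschitz fun k l ↦ weight k l ^ e :=
  antidiagonalLipschitz_of_congr _ (weight_pow_congr e)

lemma AntidiagonalLipschitz.dvd_sub_double (hg : AntidiagonalLipschitz g) (s t j k l : ℕ) :
    2 ^ (j + 2) ∣ g (2 * (k + 2 ^ j) + s) (2 * l + t) - g (2 * k + s) (2 * (l + 2 ^ j) + t) := by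
  convert hg (j + 1) (2 * k + s) (2 * l + t) using 3 <;> ring

lemma AntidiagonalLipschitz.dvd_sub_mul (hg : AntidiagonalLipschitz g) (j i k l : ℕ) :
    2 ^ (j + 1) ∣ g (k + i * 2 ^ j) l - g k (l + i * 2 ^ j) := by
  induction i generalizing l with
  | zero => simp
  | succ i ih =>
    convert dvd_add (hg j (k + i * 2 ^ j) l) (ih (l + 2 ^ j)) using 1
    rw [sub_add_sub_cancel]
    congr 2 <;> ring

end AntidiagonalLipschitz

section Twist

/-- The weight function that `g` induces on the pairs `(k, l)` when the binomial coefficients at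
`(2 * k + s, 2 * l + t)` are expressed by those at `(k, l)`. -/
noncomputable def twist (e s t : ℕ) (g : ℕ → ℕ → ℤ_[2]) (k l : ℕ) : ℤ_[2] :=
  weight (k + s) (l + t) ^ e * g (2 * k + s) (2 * l + t)

variable {g h : ℕ → ℕ → ℤ_[2]}

lemma twist_comm (hsymm : ∀ k l, g k l = g l k) (e s t k l : ℕ) :
    twist e s t g k l = twist e t s g l k := by
  rw [twist, twist, weight_comm, hsymm]

lemma twist_congr (hg : AntidiagonalLipschitz g) (e s t j k l : ℕ) :
    2 ^ (j + 2) ∣ twist e s t g (k + 2 ^ j) l -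
      (1 + 2 ^ (j + 1)) ^ ((k + l + (s + t)) * e) * twist e s t g k (l + 2 ^ j) := by
  have hw := weight_pow_congr e j (k + s) (l + t)
  rw [add_add_add_comm] at hw
  convert dvd_add (hw.mul_right (g (2 * (k + 2 ^ j) + s) (2 * l + t)))
    ((hg.dvd_sub_double s t j k l).mul_left ((1 + 2 ^ (j + 1)) ^ ((k + l + (s + t)) * e) *
      weight (k + s) (l + t + 2 ^ j) ^ e)) using 1
  simp only [twist, add_right_comm _ (2 ^ j)]
  ring

lemma AntidiagonalLipschitz.twist (hg : AntidiagonalLipschitz g) (e s t : ℕ) :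
    AntidiagonalLipschitz (twist e s t g) :=
  antidiagonalLipschitz_of_congr _ (twist_congr hg e s t)

lemma two_dvd_twist_add_twist (hg : AntidiagonalLipschitz g) (e k l : ℕ) :
    2 ∣ (twist e 0 1 g + twist e 1 0 g) k l := by
  have hw : 2 ∣ weight (k + 1) l ^ e - weight k (l + 1) ^ e :=
    antidiagonalLipschitz_weight_pow e 0 k l
  have hg' : 2 ∣ g (2 * k + 1) (2 * l) - g (2 * k) (2 * l + 1) := hg 0 (2 * k) (2 * l)
  convert dvd_add (dvd_add (hw.mul_right (g (2 * k + 1) (2 * l)))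
    (hg'.mul_left (weight k (l + 1) ^ e))) (dvd_mul_right 2 (twist e 0 1 g k l)) using 1
  simp only [Pi.add_apply, BinomialPowerSum.twist, add_zero]
  ring

lemma twist_add_twist_comm (hsymm : ∀ k l, g k l = g l k) (e k l : ℕ) :
    (twist e 0 1 g + twist e 1 0 g) k l = (twist e 0 1 g + twist e 1 0 g) l k := by
  simp only [Pi.add_apply]
  rw [twist_comm hsymm e 0 1 k, twist_comm hsymm e 1 0 k, add_comm]

lemma exists_twist_add_twist_eq_two_smul (hg : AntidiagonalLipschitz g) (e : ℕ) :
    ∃ h, AntidiagonalLipschitz h ∧ twist e 0 1 g + twist e 1 0 g = (2 : ℤ_[2]) • h := by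
  choose h hh using two_dvd_twist_add_twist hg e
  refine ⟨h, fun j k l ↦ ?_, funext₂ hh⟩
  rw [← mul_dvd_mul_iff_left prime_two.ne_zero, ← pow_succ', mul_sub, ← hh, ← hh]
  set r : ℤ_[2] := (1 + 2 ^ (j + 1)) ^ ((k + l + 1) * e)
  have hcarry : 2 ^ (j + 2) ∣ (r - 1) * (twist e 0 1 g + twist e 1 0 g) k (l + 2 ^ j) := by
    rw [pow_succ]
    exact mul_dvd_mul (dvd_one_add_pow_sub_one _ _) (two_dvd_twist_add_twist hg e k _)
  convert dvd_add (dvd_add (twist_congr hg e 0 1 j k l) (twist_congr hg e 1 0 j k l)) hcarry using 1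
  simp only [Pi.add_apply, zero_add, add_zero, r]
  ring

/-- The parity of the halved weight detects adjacent ones at the bottom of the binary expansion: the
last two binary digits of `2 * m + 1` are both `1` iff `m` is odd. -/
lemma two_dvd_half_twist_iff {e : ℕ} (he : Odd e) (hg : AntidiagonalLipschitz g)
    (hsymm : ∀ k l, g k l = g l k) (hh : twist e 0 1 g + twist e 1 0 g = (2 : ℤ_[2]) • h) (m : ℕ) :
    2 ∣ h 0 m ↔ 2 ∣ g 0 (2 * m + 1) ∨ ¬Even m := by
  set a := weight 0 (m + 1) ^ e
  have hsum : 2 * h 0 m = a * g 0 (2 * m + 1) + (2 * m + 1) ^ e * a * g 1 (2 * m) := by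
    have := congrFun₂ hh 0 m
    simp only [Pi.add_apply, Pi.smul_apply, smul_eq_mul, twist, zero_add, add_zero, mul_zero,
      weight_one_left, mul_pow] at this
    exact this.symm
  obtain ⟨b, hb⟩ := four_dvd_two_mul_add_one_pow_sub he (m : ℤ_[2])
  obtain ⟨c, hc⟩ : 4 ∣ g 0 (2 * m + 1) - g 1 (2 * m) := by
    convert hg.dvd_sub_mul 1 m 1 0 using 1
    · norm_num
    · rw [hsymm 0]
      congr 2 <;> ring
  have hmod : 2 ∣ h 0 m - a * ((m + 1) * g 0 (2 * m + 1)) := by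
    refine ⟨a * (b * g 1 (2 * m) - (2 * m + 1) * c), mul_left_cancel₀ prime_two.ne_zero ?_⟩
    linear_combination hsum + a * g 1 (2 * m) * hb - (2 * m + 1) * a * hc
  have hm : (2 : ℤ_[2]) ∣ m + 1 ↔ ¬Even m := by
    have := pow_dvd_natCast_iff (p := 2) (t := 1) (x := m + 1)
    push_cast [pow_one] at this
    rw [this, ← even_iff_two_dvd, Nat.even_add_one]
  rw [dvd_iff_dvd_of_dvd_sub hmod, ((isUnit_weight _ _).pow e).dvd_mul_left, prime_two.dvd_mul, hm,
    or_comm]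

end Twist

section ChoosePowSum

/-- The sum of the `e`-th powers of the binomial coefficients `(k + l).choose k` with `k + l = n`,
weighted by `g`. -/
noncomputable def choosePowSum (e n : ℕ) (g : ℕ → ℕ → ℤ_[2]) : ℤ_[2] :=
  ∑ p ∈ antidiagonal n, ((p.1 + p.2).choose p.1 : ℤ_[2]) ^ e * g p.1 p.2

lemma choosePowSum_one (e n : ℕ) :
    choosePowSum e n 1 = ((∑ k ∈ range (n + 1), n.choose k ^ e : ℕ) : ℤ_[2]) := by
  rw [choosePowSum, Nat.sum_antidiagonal_eq_sum_range_succ_mk, Nat.cast_sum]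
  refine sum_congr rfl fun k hk ↦ ?_
  simp [Nat.add_sub_cancel' (mem_range_succ_iff.1 hk)]

variable {e : ℕ} {g : ℕ → ℕ → ℤ_[2]}

lemma choosePowSum_zero : choosePowSum e 0 g = g 0 0 := by
  simp [choosePowSum]

lemma choosePowSum_add (n : ℕ) (g h : ℕ → ℕ → ℤ_[2]) :
    choosePowSum e n (g + h) = choosePowSum e n g + choosePowSum e n h := by
  simp only [choosePowSum, Pi.add_apply, mul_add, sum_add_distrib]

lemma choosePowSum_smul (n : ℕ) (c : ℤ_[2]) (g : ℕ → ℕ → ℤ_[2]) :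
    choosePowSum e n (c • g) = c * choosePowSum e n g := by
  simp only [choosePowSum, Pi.smul_apply, smul_eq_mul, mul_left_comm _ c, mul_sum]

lemma choosePowSum_two_mul_succ (e n : ℕ) (g : ℕ → ℕ → ℤ_[2]) :
    choosePowSum e (2 * (n + 1)) g = oddFactorial (n + 1) ^ e *
      (choosePowSum e (n + 1) (twist e 0 0 g) +
        (2 * (n + 1)) ^ e * choosePowSum e n (twist e 1 1 g)) := by
  simp only [choosePowSum]
  rw [mul_add (_ ^ e), mul_sum, mul_sum, mul_sum,
    sum_antidiagonal_two_mul_succ n fun k l ↦ ((k + l).choose k : ℤ_[2]) ^ e * g k l]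
  congr 1 <;> refine sum_congr rfl fun p hp ↦ ?_ <;> rw [← mem_antidiagonal.1 hp]
  · have := choose_two_mul_add (s := 0) (t := 0) zero_le_one p.1 p.2
    simp only [add_zero] at this
    simp only [this, twist, add_zero, mul_pow]
    ring
  · simp only [choose_two_mul_add_one_add_one, twist, mul_pow]
    push_cast
    ring

lemma choosePowSum_two_mul_add_one (e n : ℕ) (g : ℕ → ℕ → ℤ_[2]) :
    choosePowSum e (2 * n + 1) g = oddFactorial (n + 1) ^ e *
      choosePowSum e n (twist e 0 1 g + twist e 1 0 g) := by
  rw [choosePowSum_add, mul_add]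
  simp only [choosePowSum, mul_sum]
  rw [sum_antidiagonal_two_mul_add_one n fun k l ↦ ((k + l).choose k : ℤ_[2]) ^ e * g k l]
  congr 1 <;> refine sum_congr rfl fun p hp ↦ ?_ <;> rw [← mem_antidiagonal.1 hp]
  · have := choose_two_mul_add (s := 0) (t := 1) le_rfl p.1 p.2
    simp only [add_zero, zero_add] at this
    simp only [this, twist, add_zero, mul_pow]
    ring
  · have := choose_two_mul_add (s := 1) (t := 0) le_rfl p.1 p.2
    simp only [add_zero] at this
    simp only [this, twist, add_zero, mul_pow]
    ring

end ChoosePowSum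

section Divisibility

variable {e : ℕ} {g : ℕ → ℕ → ℤ_[2]}

lemma two_pow_s2_succ_add_dvd {c n : ℕ} {x : ℤ_[2]} (hc : c < e) (hx : 2 ^ s2 n ∣ x) :
    2 ^ (s2 (n + 1) + c) ∣ (2 * (n + 1)) ^ e * x := by
  have hexp : s2 (n + 1) + c ≤ e + s2 n := by linarith [s2_succ_le n]
  refine (pow_dvd_pow 2 hexp).trans ?_
  rw [pow_add, mul_pow]
  exact mul_dvd_mul (dvd_mul_right _ _) hx

theorem two_pow_s2_dvd_choosePowSum (he : e ≠ 0) (n : ℕ) (hg : AntidiagonalLipschitz g) :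
    2 ^ s2 n ∣ choosePowSum e n g := by
  induction n using Nat.evenOddStrongRec generalizing g with
  | h_even n ih =>
    rcases n with _ | n
    · simp [s2]
    · rw [choosePowSum_two_mul_succ, s2_two_mul]
      refine (dvd_add (ih (n + 1) (by omega) (hg.twist e 0 0)) ?_).mul_left _
      exact two_pow_s2_succ_add_dvd (pos_of_ne_zero he) (ih n (by omega) (hg.twist e 1 1))
  | h_odd m ih =>
    obtain ⟨h, hh, hsum⟩ := exists_twist_add_twist_eq_two_smul hg e
    rw [choosePowSum_two_mul_add_one, hsum, choosePowSum_smul, s2_two_mul_add_one, pow_succ']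
    exact (mul_dvd_mul_left 2 (ih m (by omega) hh)).mul_left _

theorem two_pow_s2_succ_dvd_choosePowSum_iff (he : Odd e) (he1 : 1 < e) (n : ℕ)
    (hg : AntidiagonalLipschitz g) (hsymm : ∀ k l, g k l = g l k) :
    2 ^ (s2 n + 1) ∣ choosePowSum e n g ↔ 2 ∣ g 0 n ∨ ¬NoAdjacentOnes n := by
  induction n using Nat.evenOddStrongRec generalizing g with
  | h_even n ih =>
    rcases n with _ | n
    · simp [s2, choosePowSum_zero, NoAdjacentOnes]
    · have hodd := two_pow_s2_succ_add_dvd he1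
        (two_pow_s2_dvd_choosePowSum he.pos.ne' n (hg.twist e 1 1))
      rw [choosePowSum_two_mul_succ, s2_two_mul, noAdjacentOnes_two_mul,
        ((isUnit_oddFactorial _).pow e).dvd_mul_left, dvd_add_left hodd,
        ih (n + 1) (by omega) (hg.twist e 0 0) (twist_comm hsymm e 0 0), twist,
        ((isUnit_weight _ _).pow e).dvd_mul_left]
      rfl
  | h_odd m ih =>
    obtain ⟨h, hh, hsum⟩ := exists_twist_add_twist_eq_two_smul hg e
    have hhsymm (k l : ℕ) : h k l = h l k :=
      mul_left_cancel₀ prime_two.ne_zero <| by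
        simpa only [hsum, Pi.smul_apply, smul_eq_mul] using twist_add_twist_comm hsymm e k l
    rw [choosePowSum_two_mul_add_one, hsum, choosePowSum_smul, s2_two_mul_add_one, pow_succ',
      ((isUnit_oddFactorial _).pow e).dvd_mul_left, mul_dvd_mul_iff_left prime_two.ne_zero,
      ih m (by omega) hh hhsymm, two_dvd_half_twist_iff he hg hsymm hsum,
      noAdjacentOnes_two_mul_add_one, not_and_or, or_assoc]

lemma two_pow_dvd_choosePowSum_one_iff {n t : ℕ} :
    2 ^ t ∣ choosePowSum e n 1 ↔ t ≤ padicValNat 2 (∑ k ∈ range (n + 1), n.choose k ^ e) := by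
  have hpos : 0 < ∑ k ∈ range (n + 1), n.choose k ^ e :=
    sum_pos (fun k hk ↦ pow_pos (Nat.choose_pos (mem_range_succ_iff.1 hk)) e) nonempty_range_add_one
  rw [choosePowSum_one, ← padicValNat_dvd_iff_le hpos.ne', ← pow_dvd_natCast_iff]
  rfl

end Divisibility

end BinomialPowerSum

open BinomialPowerSum

theorem stmt_11 (e n : ℕ) (he : Odd e) (he2 : 3 ≤ e) (hn : 0 < n) :
    s2 n ≤ padicValNat 2 (∑ k ∈ Finset.range (n + 1), (n.choose k) ^ e) ∧
      (padicValNat 2 (∑ k ∈ Finset.range (n + 1), (n.choose k) ^ e) = s2 n ↔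
        ∀ i : ℕ, ¬(n.testBit i = true ∧ n.testBit (i + 1) = true)) := by
  have hle := two_pow_dvd_choosePowSum_one_iff.1
    (two_pow_s2_dvd_choosePowSum he.pos.ne' n antidiagonalLipschitz_one)
  have hlt_iff := two_pow_s2_succ_dvd_choosePowSum_iff he (by omega) n antidiagonalLipschitz_one
    fun _ _ ↦ rfl
  have hone : ¬2 ∣ (1 : ℕ → ℕ → ℤ_[2]) 0 n := prime_two.not_dvd_one
  rw [two_pow_dvd_choosePowSum_one_iff, Nat.succ_le_iff, or_iff_right hone] at hlt_iff
  refine ⟨hle, ?_⟩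
  change _ ↔ NoAdjacentOnes n
  rw [← not_iff_not, ← hlt_iff, hle.lt_iff_ne']
end

section
/- Let k and n be positive integers, and let S be the sum of all odd 2k-nomial coefficients with n at the top, i.e., S = ∑ over all (x₁, …, x_{2k}) with x₁+⋯+x_{2k} = n and n!/(x₁!⋯x_{2k}!) odd, of n!/(x₁!⋯x_{2k}!). Then ν₂(S) ≥ s₂(n) + ν₂(k). If k is odd, equality holds if and only if the binary expansion of n does not contain two adjacent 1s (for every i, n does not have both bit i and bit i+1 equal to 1). If k is even, equality holds if and only if, in the binary expansion of n, all of the 1s come before all of the 0s, i.e., n = 2^a·(2^b − 1) for some nonnegative integer a and positive integer b. -/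
/-!
Identify `n` with the set `E` of its binary digits. By Lucas' theorem the odd entries of row `n` of
Pascal's triangle are indexed by the subsets `A` of `E`. By induction on `E`, adjoining a new least
element, `A ↦ C(n, ∑ i ∈ A, 2 ^ i)` is an integral polynomial in the doubled indicators of the
elements of `E`. The sum of such a polynomial over all `A ⊆ E` is divisible by `2 ^ #E`, and
working modulo twice the ring of these polynomials one finds that the cofactor `w E` of the row sum
is odd exactly when `E` has no two consecutive elements.

Splitting multinomials into binomials and grouping the `2k` variables in pairs shows that `S` is
`2 ^ #E` times the `k`-th power of `w` for the binomial convolution. Restricting to the sets that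
contain a fixed `j ∈ E` is a derivation of this convolution, which produces the factor `k`:
the `k`-th power of `w` is `k * q` with `q` the convolution of the restricted `w` and the
`(k - 1)`-st power. Modulo `2` this power is the unit when `k` is odd and `w` when `k` is even.
For `k` odd, `q` thus has the parity of `w E`. For `k` even and `j` minimal, it has the parity of
the number of splittings of `E` into two sets without consecutive elements, the first containing
`j`; removing the least elements one at a time shows this number to be odd exactly for intervals.
-/

open Finset

section Dyadic

variable {ι : Type*} {E : Finset ι} {f g g' b : Finset ι → ℤ}

/-- A function on the subsets of `E` is dyadic if it is an integral polynomial in the doubled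
indicators `A ↦ if j ∈ A then 2 else 0` of the elements of `E`. Multilinearity makes this the
divisibility of its Möbius coefficients encoded here; values outside `E.powerset` are junk. -/
def IsDyadicOn (E : Finset ι) (f : Finset ι → ℤ) : Prop :=
  ∃ h : Finset ι → ℤ, ∀ A ⊆ E, f A = ∑ C ∈ A.powerset, 2 ^ #C * h C

lemma exists_eq_two_mul_of_odd_mul {u : Finset ι → ℤ} (hodd : ∀ A ⊆ E, Odd (b A))
    (h : ∀ A ⊆ E, b A * f A = 2 * u A) :
    ∃ e : Finset ι → ℤ, ∀ A ⊆ E, f A = 2 * e A ∧ b A * e A = u A := by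
  refine ⟨fun A => f A / 2, fun A hA => ?_⟩
  obtain ⟨e, he⟩ : (2 : ℤ) ∣ f A := ((Int.even_mul.1 (h A hA ▸ even_two_mul (u A))).resolve_left
    (Int.not_even_iff_odd.2 (hodd A hA))).two_dvd
  have := h A hA
  simp only [he, Int.mul_ediv_cancel_left e two_ne_zero, true_and]
  rw [he] at this
  linarith

lemma isDyadicOn_empty (f : Finset ι → ℤ) : IsDyadicOn ∅ f :=
  ⟨f, by simp⟩

lemma isDyadicOn_insert [DecidableEq ι] {i : ι} (hi : i ∉ E) :
    IsDyadicOn (insert i E) f ↔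
      IsDyadicOn E f ∧ ∃ g, IsDyadicOn E g ∧ ∀ A ⊆ E, f (insert i A) = f A + 2 * g A := by
  constructor
  · rintro ⟨h, hf⟩
    have hfE : ∀ A ⊆ E, f A = ∑ C ∈ A.powerset, 2 ^ #C * h C :=
      fun A hA => hf A (hA.trans (subset_insert i E))
    refine ⟨⟨h, hfE⟩, fun A => ∑ C ∈ A.powerset, 2 ^ #C * h (insert i C), ⟨_, fun _ _ => rfl⟩,
      fun A hA => ?_⟩
    have hiA : i ∉ A := notMem_mono hA hi
    rw [hf _ (insert_subset_insert i hA), sum_powerset_insert hiA, ← hfE A hA, mul_sum]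
    congr 1
    refine sum_congr rfl fun C hC => ?_
    rw [card_insert_of_notMem (notMem_mono (mem_powerset.1 hC) hiA), pow_succ']
    ring
  · rintro ⟨⟨h, hf⟩, g, ⟨h', hg⟩, hfg⟩
    refine ⟨fun C => if i ∈ C then h' (C.erase i) else h C, fun A hA => ?_⟩
    have sum_of_notMem {B : Finset ι} (hiB : i ∉ B) :
        ∑ C ∈ B.powerset, 2 ^ #C * (if i ∈ C then h' (C.erase i) else h C) =
          ∑ C ∈ B.powerset, 2 ^ #C * h C :=
      sum_congr rfl fun C hC => by rw [if_neg (notMem_mono (mem_powerset.1 hC) hiB)]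
    by_cases hiA : i ∈ A
    · obtain ⟨B, hiB, rfl⟩ : ∃ B, i ∉ B ∧ insert i B = A :=
        ⟨A.erase i, notMem_erase i A, insert_erase hiA⟩
      have hB : B ⊆ E := (insert_subset_insert_iff hiB).1 hA
      rw [hfg B hB, hf B hB, hg B hB, sum_powerset_insert hiB, sum_of_notMem hiB, mul_sum]
      congr 1
      refine sum_congr rfl fun C hC => ?_
      have hiC : i ∉ C := notMem_mono (mem_powerset.1 hC) hiB
      simp only [mem_insert_self, if_true, erase_insert hiC, card_insert_of_notMem hiC, pow_succ']
      ring
    · rw [hf A ((subset_insert_iff_of_notMem hiA).1 hA), sum_of_notMem hiA]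

namespace IsDyadicOn

lemma congr (hf : IsDyadicOn E f) (hfg : ∀ A ⊆ E, f A = g A) : IsDyadicOn E g :=
  hf.imp fun _ h A hA => (hfg A hA).symm.trans (h A hA)

lemma const (E : Finset ι) (c : ℤ) : IsDyadicOn E fun _ => c := by
  classical exact ⟨fun C => if C = ∅ then c else 0, by simp⟩

lemma add (hf : IsDyadicOn E f) (hg : IsDyadicOn E g) : IsDyadicOn E (f + g) := by
  obtain ⟨h, hf⟩ := hf
  obtain ⟨h', hg⟩ := hg
  exact ⟨h + h', fun A hA => by simp [hf A hA, hg A hA, mul_add, sum_add_distrib]⟩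

lemma mul (hf : IsDyadicOn E f) (hg : IsDyadicOn E g) : IsDyadicOn E (f * g) := by
  classical
  induction E using Finset.induction_on generalizing f g with
  | empty => exact isDyadicOn_empty _
  | insert i E hi ih =>
    obtain ⟨hf, f', hf', hff'⟩ := (isDyadicOn_insert hi).1 hf
    obtain ⟨hg, g', hg', hgg'⟩ := (isDyadicOn_insert hi).1 hg
    refine (isDyadicOn_insert hi).2 ⟨ih hf hg, f' * g + (f + (fun _ => 2) * f') * g',
      (ih hf' hg).add (ih (hf.add (ih (const E 2) hf')) hg'), fun A hA => ?_⟩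
    simp only [Pi.mul_apply, Pi.add_apply, hff' A hA, hgg' A hA]
    ring

lemma sub (hf : IsDyadicOn E f) (hg : IsDyadicOn E g) : IsDyadicOn E (f - g) :=
  (hf.add ((const E (-1)).mul hg)).congr fun A _ => by simp [sub_eq_add_neg]

lemma comp_sdiff [DecidableEq ι] (hf : IsDyadicOn E f) : IsDyadicOn E fun A => f (E \ A) := by
  induction E using Finset.induction_on generalizing f with
  | empty => exact isDyadicOn_empty _
  | insert i E hi ih =>
    obtain ⟨hf, g, hg, hfg⟩ := (isDyadicOn_insert hi).1 hf
    have eval_sdiff : ∀ A ⊆ E, f (insert i E \ A) = f (E \ A) + 2 * g (E \ A) := fun A hA => by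
      rw [insert_sdiff_of_notMem _ (notMem_mono hA hi), hfg _ sdiff_subset]
    refine (isDyadicOn_insert hi).2 ⟨((ih hf).add ((const E 2).mul (ih hg))).congr
      fun A hA => (eval_sdiff A hA).symm, _, (const E (-1)).mul (ih hg), fun A hA => ?_⟩
    simp only [insert_sdiff_insert, eval_sdiff A hA, sdiff_insert_of_notMem hi, Pi.mul_apply]
    ring

lemma two_pow_card_dvd_sum (hf : IsDyadicOn E f) : 2 ^ #E ∣ ∑ A ∈ E.powerset, f A := by
  classical
  induction E using Finset.induction_on generalizing f with
  | empty => simp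
  | insert i E hi ih =>
    obtain ⟨hf, g, hg, hfg⟩ := (isDyadicOn_insert hi).1 hf
    have sum_insert : ∑ A ∈ (insert i E).powerset, f A = 2 * ∑ A ∈ E.powerset, (f + g) A := by
      rw [sum_powerset_insert hi, sum_congr rfl fun A hA => hfg A (mem_powerset.1 hA),
        mul_sum, ← sum_add_distrib]
      exact sum_congr rfl fun A _ => by rw [Pi.add_apply]; ring
    rw [sum_insert, card_insert_of_notMem hi, pow_succ']
    exact mul_dvd_mul_left 2 (ih (hf.add hg))

lemma of_mul_left (hb : IsDyadicOn E b) (hodd : ∀ A ⊆ E, Odd (b A)) (h : IsDyadicOn E (b * f)) :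
    IsDyadicOn E f := by
  classical
  induction E using Finset.induction_on generalizing f b with
  | empty => exact isDyadicOn_empty _
  | insert i E hi ih =>
    obtain ⟨hbE, v, hv, hbv⟩ := (isDyadicOn_insert hi).1 hb
    obtain ⟨hbf, u, hu, hbfu⟩ := (isDyadicOn_insert hi).1 h
    have hfE : IsDyadicOn E f := ih hbE (fun A hA => hodd A (hA.trans (subset_insert i E))) hbf
    have hoddi : ∀ A ⊆ E, Odd (b (insert i A)) := fun A hA => hodd _ (insert_subset_insert i hA)
    have mul_diff : ∀ A ⊆ E, b (insert i A) * (f (insert i A) - f A) = 2 * (u - v * f) A :=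
      fun A hA => by
        have hbfu := hbfu A hA
        simp only [Pi.mul_apply] at hbfu
        simp only [Pi.sub_apply, Pi.mul_apply]
        linear_combination hbfu - f A * hbv A hA
    obtain ⟨e, he⟩ := exists_eq_two_mul_of_odd_mul hoddi mul_diff
    have hbi : IsDyadicOn E fun A => b (insert i A) :=
      (hbE.add ((const E 2).mul hv)).congr fun A hA => (hbv A hA).symm
    exact (isDyadicOn_insert hi).2 ⟨hfE, e,
      ih hbi hoddi ((hu.sub (hv.mul hfE)).congr fun A hA => (he A hA).2.symm),
      fun A hA => sub_eq_iff_eq_add'.1 (he A hA).1⟩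

end IsDyadicOn

/-- Congruence on the subsets of `E` modulo twice the ring of dyadic functions. -/
def DyadicModEq (E : Finset ι) (f g : Finset ι → ℤ) : Prop :=
  ∃ ρ, IsDyadicOn E ρ ∧ ∀ A ⊆ E, f A = g A + 2 * ρ A

namespace DyadicModEq

lemma of_eq (h : ∀ A ⊆ E, f A = g A) : DyadicModEq E f g :=
  ⟨_, .const E 0, by simpa using h⟩

lemma trans (h : DyadicModEq E f g) (h' : DyadicModEq E g g') : DyadicModEq E f g' := by
  obtain ⟨ρ, hρ, h⟩ := h
  obtain ⟨ρ', hρ', h'⟩ := h'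
  exact ⟨_, hρ.add hρ', fun A hA => by rw [h A hA, h' A hA, Pi.add_apply]; ring⟩

instance : Trans (DyadicModEq E) (DyadicModEq E) (DyadicModEq E) := ⟨trans⟩

lemma symm (h : DyadicModEq E f g) : DyadicModEq E g f := by
  obtain ⟨ρ, hρ, h⟩ := h
  exact ⟨_, (IsDyadicOn.const E (-1)).mul hρ, fun A hA => by rw [h A hA, Pi.mul_apply]; ring⟩

lemma isDyadicOn (h : DyadicModEq E f g) (hg : IsDyadicOn E g) : IsDyadicOn E f := by
  obtain ⟨ρ, hρ, h⟩ := h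
  exact (hg.add ((IsDyadicOn.const E 2).mul hρ)).congr fun A hA => (h A hA).symm

lemma add_right (h : DyadicModEq E f g) (b : Finset ι → ℤ) : DyadicModEq E (f + b) (g + b) := by
  obtain ⟨ρ, hρ, h⟩ := h
  exact ⟨ρ, hρ, fun A hA => by simp only [Pi.add_apply, h A hA]; ring⟩

lemma comp_sdiff [DecidableEq ι] (h : DyadicModEq E f g) :
    DyadicModEq E (fun A => f (E \ A)) fun A => g (E \ A) := by
  obtain ⟨ρ, hρ, h⟩ := h
  exact ⟨_, hρ.comp_sdiff, fun A _ => h _ sdiff_subset⟩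

lemma mul_left (hb : IsDyadicOn E b) (h : DyadicModEq E f g) : DyadicModEq E (b * f) (b * g) := by
  obtain ⟨ρ, hρ, h⟩ := h
  exact ⟨_, hb.mul hρ, fun A hA => by simp only [Pi.mul_apply, h A hA]; ring⟩

lemma mul_left_cancel (hb : IsDyadicOn E b) (hodd : ∀ A ⊆ E, Odd (b A))
    (h : DyadicModEq E (b * f) (b * g)) : DyadicModEq E f g := by
  obtain ⟨ρ, hρ, h⟩ := h
  obtain ⟨e, he⟩ := exists_eq_two_mul_of_odd_mul (f := f - g) hodd fun A hA => by
    have h := h A hA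
    simp only [Pi.mul_apply] at h
    rw [Pi.sub_apply, mul_sub, h, add_sub_cancel_left]
  exact ⟨e, .of_mul_left hb hodd (hρ.congr fun A hA => (he A hA).2.symm),
    fun A hA => sub_eq_iff_eq_add'.1 (he A hA).1⟩

lemma sum_modEq (h : DyadicModEq E f g) :
    ∑ A ∈ E.powerset, f A ≡ ∑ A ∈ E.powerset, g A [ZMOD 2 ^ (#E + 1)] := by
  obtain ⟨ρ, hρ, h⟩ := h
  rw [sum_congr rfl fun A hA => h A (mem_powerset.1 hA), sum_add_distrib, ← mul_sum, pow_succ']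
  exact (Int.modEq_iff_dvd.2 (by simpa using mul_dvd_mul_left 2 hρ.two_pow_card_dvd_sum)).symm

lemma const_odd {c : ℤ} (hc : Odd c) : DyadicModEq E (fun _ => c) 1 := by
  obtain ⟨d, rfl⟩ := hc
  exact ⟨_, .const E d, fun _ _ => add_comm _ _⟩

lemma prod_one {κ : Type*} {s : Finset κ} {F : κ → Finset ι → ℤ}
    (h : ∀ r ∈ s, DyadicModEq E (F r) 1) : DyadicModEq E (∏ r ∈ s, F r) 1 := by
  classical
  induction s using Finset.induction_on with
  | empty => exact .of_eq fun _ _ => rfl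
  | insert r s hr ih =>
    rw [prod_insert hr]
    have hF := h r (mem_insert_self r s)
    have hprod := ih fun r hr => h r (mem_insert_of_mem hr)
    exact (hprod.mul_left (hF.isDyadicOn (.const E 1))).trans ((mul_one (F r)).symm ▸ hF)

end DyadicModEq

/-- The function on finite sets with value `2` on those containing `j` and `0` elsewhere. -/
def doubledIndicator [DecidableEq ι] (j : ι) (A : Finset ι) : ℤ := if j ∈ A then 2 else 0

lemma isDyadicOn_doubledIndicator [DecidableEq ι] (E : Finset ι) (j : ι) :
    IsDyadicOn E (doubledIndicator j) := by
  refine ⟨fun C => if C = {j} then 1 else 0, fun A _ => ?_⟩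
  simp [doubledIndicator]

lemma even_doubledIndicator [DecidableEq ι] (j : ι) (A : Finset ι) :
    Even (doubledIndicator j A) := by
  rw [doubledIndicator]
  split_ifs <;> decide

lemma doubledIndicator_add_one_sq_modEq [DecidableEq ι] (E : Finset ι) (j : ι) :
    DyadicModEq E ((doubledIndicator j + 1) * (doubledIndicator j + 1)) 1 := by
  refine ⟨_, (IsDyadicOn.const E 2).mul (isDyadicOn_doubledIndicator E j), fun A _ => ?_⟩
  simp only [Pi.mul_apply, Pi.add_apply, Pi.one_apply, doubledIndicator]
  split_ifs <;> norm_num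

lemma doubledIndicator_sdiff_add [DecidableEq ι] {A : Finset ι} (hA : A ⊆ E) (j : ι) :
    doubledIndicator j (E \ A) + doubledIndicator j A = doubledIndicator j E := by
  have := @hA j
  simp only [doubledIndicator, mem_sdiff]
  split_ifs <;> simp_all

lemma doubledIndicator_sdiff_modEq [DecidableEq ι] (E : Finset ι) (j : ι) :
    DyadicModEq E (fun A => doubledIndicator j (E \ A)) (doubledIndicator j) := by
  obtain ⟨c, hc⟩ := (even_doubledIndicator j E).two_dvd
  refine ⟨_, (IsDyadicOn.const E c).sub (isDyadicOn_doubledIndicator E j), fun A hA => ?_⟩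
  rw [Pi.sub_apply]
  linarith [doubledIndicator_sdiff_add hA j]

lemma isDyadicOn_sum_even {a : ι → ℤ} (ha : ∀ j ∈ E, Even (a j)) :
    IsDyadicOn E fun A => ∑ j ∈ A, a j := by
  classical
  induction E using Finset.induction_on with
  | empty => exact isDyadicOn_empty _
  | insert i E hi ih =>
    obtain ⟨c, hc⟩ := (ha i (mem_insert_self i E)).two_dvd
    refine (isDyadicOn_insert hi).2 ⟨ih fun j hj => ha j (mem_insert_of_mem hj), _, .const E c,
      fun A hA => ?_⟩
    rw [sum_insert (notMem_mono hA hi), hc, add_comm]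

lemma choose_two_mul_mul_prod_odd (m M : ℕ) :
    (2 * m + 2 * M).choose (2 * M) * ∏ r ∈ range M, (2 * r + 1) =
      (m + M).choose M * ∏ r ∈ range M, (2 * (m + r) + 1) := by
  induction M with
  | zero => simp
  | succ M ih =>
    have choose_double := Nat.add_one_mul_choose_eq (2 * m + 2 * M + 1) (2 * M + 1)
    have choose_double_pred := Nat.add_one_mul_choose_eq (2 * m + 2 * M) (2 * M)
    have choose_half := Nat.add_one_mul_choose_eq (m + M) M
    rw [prod_range_succ, prod_range_succ, show 2 * m + 2 * (M + 1) = 2 * m + 2 * M + 1 + 1 by ring,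
      show 2 * (M + 1) = 2 * M + 1 + 1 by ring, ← add_assoc m]
    refine Nat.eq_of_mul_eq_mul_right (Nat.succ_pos (2 * M + 1)) ?_
    zify at *
    linear_combination (2 * M + 1) * (-choose_double) * ∏ r ∈ range M, (2 * (r : ℤ) + 1)
      - (2 * m + 2 * M + 2) * choose_double_pred * ∏ r ∈ range M, (2 * (r : ℤ) + 1)
      + (2 * m + 2 * M + 1) * (2 * m + 2 * M + 2) * ih
      + 2 * (2 * m + 2 * M + 1) * choose_half * ∏ r ∈ range M, (2 * (m + r : ℤ) + 1)

lemma prod_odd_modEq_one {m : Finset ι → ℤ} (hm : IsDyadicOn E m) (M : ℕ) :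
    DyadicModEq E (∏ r ∈ range M, fun A => 2 * (m A + r) + 1) 1 :=
  .prod_one fun r _ => ⟨_, hm.add (.const E r), fun A _ => by
    rw [Pi.add_apply, Pi.one_apply, add_comm]⟩

lemma choose_double_modEq {m : Finset ι → ℕ} {M : ℕ} (hm : IsDyadicOn E fun A => m A)
    (hc : IsDyadicOn E fun A => (m A + M).choose M) :
    DyadicModEq E (fun A => (2 * m A + 2 * M).choose (2 * M)) fun A => (m A + M).choose M := by
  have odd_prod : Odd (∏ r ∈ range M, (2 * r + 1 : ℤ)) :=
    prod_induction _ Odd (fun _ _ => Odd.mul) odd_one fun r _ => odd_two_mul_add_one _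
  let q : Finset ι → ℤ := fun _ => ∏ r ∈ range M, (2 * r + 1)
  let c : Finset ι → ℤ := fun A => (m A + M).choose M
  refine .mul_left_cancel (b := q) (.const E _) (fun _ _ => odd_prod) ?_
  calc q * (fun A => ((2 * m A + 2 * M).choose (2 * M) : ℤ))
    _ = c * ∏ r ∈ range M, fun A => 2 * (m A + r : ℤ) + 1 := by
      ext A
      simp only [Pi.mul_apply, prod_apply, q, c]
      rw [mul_comm]
      exact_mod_cast choose_two_mul_mul_prod_odd (m A) M
    DyadicModEq E _ (c * q) :=
      ((prod_odd_modEq_one hm M).trans (DyadicModEq.const_odd odd_prod).symm).mul_left hc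
    _ = q * c := mul_comm _ _

lemma choose_two_pow_mul_add_modEq {y : Finset ι → ℕ} (hy : IsDyadicOn E fun A => y A) (i : ℕ) :
    DyadicModEq E (fun A => (2 ^ i * y A + 2 ^ i).choose (2 ^ i)) fun A => y A + 1 := by
  induction i with
  | zero => exact .of_eq fun A _ => by simp
  | succ i ih =>
    simp only [pow_succ', mul_assoc]
    have hm : IsDyadicOn E fun A => (2 ^ i * y A : ℕ) :=
      ((IsDyadicOn.const E (2 ^ i)).mul hy).congr fun A _ => by simp
    exact (choose_double_modEq hm (ih.isDyadicOn (hy.add (.const E 1)))).trans ih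

end Dyadic

section BitSum

/-- The natural number with binary digits `1` exactly at the positions in `A`. -/
def bitSum (A : Finset ℕ) : ℕ := ∑ i ∈ A, 2 ^ i

lemma bitSum_insert {i : ℕ} {A : Finset ℕ} (hi : i ∉ A) :
    bitSum (insert i A) = bitSum A + 2 ^ i := by
  rw [bitSum, sum_insert hi, add_comm, bitSum]

lemma bitSum_sdiff_add {A E : Finset ℕ} (hA : A ⊆ E) : bitSum (E \ A) + bitSum A = bitSum E :=
  sum_sdiff hA

lemma choose_bitSum_sdiff {A E : Finset ℕ} (hA : A ⊆ E) :
    (bitSum E).choose (bitSum (E \ A)) = (bitSum E).choose (bitSum A) :=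
  Nat.choose_symm_of_eq_add (bitSum_sdiff_add hA).symm

lemma odd_choose_iff {n k : ℕ} : Odd (n.choose k) ↔ ∀ i, k.testBit i → n.testBit i := by
  induction n using Nat.strong_induction_on generalizing k with
  | _ n ih =>
    rcases Nat.eq_zero_or_pos n with rfl | hn
    · rcases Nat.eq_zero_or_pos k with rfl | hk
      · simp
      · simpa [Nat.choose_eq_zero_of_lt hk] using Nat.exists_testBit_of_ne_zero hk.ne'
    · have lucas := Choose.choose_modEq_choose_mod_mul_choose_div_nat (n := n) (k := k) (p := 2)
      rw [Nat.odd_iff, lucas, ← Nat.odd_iff, Nat.odd_mul, ih _ (Nat.div_lt_self hn one_lt_two)]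
      conv_rhs => rw [← Nat.and_forall_add_one]
      simp only [Nat.testBit_succ, Nat.testBit_zero]
      refine and_congr_left fun _ => ?_
      rcases Nat.mod_two_eq_zero_or_one n with h | h <;>
        rcases Nat.mod_two_eq_zero_or_one k with h' | h' <;> simp [h, h']

lemma testBit_bitSum {E : Finset ℕ} {i : ℕ} : (bitSum E).testBit i ↔ i ∈ E := by
  rw [← Nat.mem_bitIndices, ← List.mem_toFinset, bitSum, toFinset_bitIndices_sum_two_pow]

lemma exists_bitSum_eq (n : ℕ) : ∃ E, bitSum E = n :=
  ⟨n.bitIndices.toFinset, sum_toFinset_bitIndices_two_pow n⟩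

lemma bitSum_injective : Function.Injective bitSum := fun A B h => by
  ext i
  rw [← testBit_bitSum, h, testBit_bitSum]

lemma odd_choose_bitSum_iff {A E : Finset ℕ} :
    Odd ((bitSum E).choose (bitSum A)) ↔ A ⊆ E := by
  simp only [odd_choose_iff, testBit_bitSum]
  rfl

lemma s2_eq_length_bitIndices (n : ℕ) : s2 n = n.bitIndices.length := by
  induction n using Nat.binaryRec' with
  | zero => simp [s2]
  | bit b n hb ih =>
    rw [s2, Nat.digits_two_eq_bits] at ih ⊢
    rw [Nat.bits_append_bit _ _ hb]
    cases b <;> simp [ih, add_comm 1 (List.length _)]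

lemma s2_bitSum (E : Finset ℕ) : s2 (bitSum E) = #E := by
  rw [s2_eq_length_bitIndices, ← List.toFinset_card_of_nodup Nat.bitIndices_nodup, bitSum,
    toFinset_bitIndices_sum_two_pow]

lemma bitSum_Ico (a b : ℕ) : bitSum (Ico a (a + b)) = 2 ^ a * (2 ^ b - 1) := by
  rw [bitSum, sum_Ico_eq_sum_range, Nat.add_sub_cancel_left]
  simp only [pow_add, ← mul_sum, Nat.geomSum_eq le_rfl, Nat.add_one_sub_one, Nat.div_one]

end BitSum

section Binomial

variable {i : ℕ} {E : Finset ℕ}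

lemma bitSum_eq_two_pow_mul_sum (hi : ∀ j ∈ E, i < j) :
    bitSum E = 2 ^ i * ∑ j ∈ E, 2 ^ (j - i) := by
  rw [bitSum, mul_sum]
  exact sum_congr rfl fun j hj => by rw [← pow_add, Nat.add_sub_cancel' (hi j hj).le]

lemma sum_two_pow_sub_modEq (hi : ∀ j ∈ E, i < j) :
    DyadicModEq E (fun A => ∑ j ∈ A, 2 ^ (j - i)) (doubledIndicator (i + 1)) := by
  refine ⟨fun A => ∑ j ∈ A, if j = i + 1 then 0 else 2 ^ (j - i - 1),
    isDyadicOn_sum_even fun j hj => ?_, fun A hA => ?_⟩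
  · have := hi j hj
    split_ifs with h
    · exact .zero
    · exact even_two.pow_of_ne_zero (by omega)
  · rw [doubledIndicator, ← sum_ite_eq' A (i + 1) fun _ => 2, mul_sum, ← sum_add_distrib]
    refine sum_congr rfl fun j hj => ?_
    split_ifs with h
    · simp [h]
    · rw [zero_add, ← pow_succ', Nat.sub_add_cancel (Nat.sub_pos_of_lt (hi j (hA hj)))]

lemma choose_bitSum_add_two_pow_modEq (hi : ∀ j ∈ E, i < j) :
    DyadicModEq E (fun A => (bitSum A + 2 ^ i).choose (2 ^ i)) (doubledIndicator (i + 1) + 1) := by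
  have hy := sum_two_pow_sub_modEq hi
  have hchoose := choose_two_pow_mul_add_modEq (y := fun A => ∑ j ∈ A, 2 ^ (j - i))
    ((hy.isDyadicOn (isDyadicOn_doubledIndicator E _)).congr fun A _ => by simp) i
  refine (DyadicModEq.of_eq fun A hA => ?_).trans (hchoose.trans ?_)
  · rw [bitSum_eq_two_pow_mul_sum fun j hj => hi j (hA hj)]
  · exact (DyadicModEq.of_eq fun A _ => by simp).trans (hy.add_right 1)

lemma odd_choose_bitSum_add_two_pow (hi : i ∉ E) : Odd ((bitSum E + 2 ^ i).choose (2 ^ i)) := by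
  have := odd_choose_bitSum_iff.2 (singleton_subset_iff.2 (mem_insert_self i E))
  rwa [bitSum_insert hi, show bitSum {i} = 2 ^ i from sum_singleton _ _] at this

lemma choose_bitSum_insert_modEq (hi : ∀ j ∈ E, i < j)
    (hf : IsDyadicOn E fun A => (bitSum E).choose (bitSum A)) :
    DyadicModEq E (fun A => (bitSum E + 2 ^ i).choose (bitSum A + 2 ^ i))
      ((fun A => ((bitSum E).choose (bitSum A) : ℤ)) * (doubledIndicator (i + 1) + 1)) := by
  set t : Finset ℕ → ℤ := doubledIndicator (i + 1)
  set f : Finset ℕ → ℤ := fun A => (bitSum E).choose (bitSum A)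
  set b : Finset ℕ → ℤ := fun A => (bitSum A + 2 ^ i).choose (2 ^ i)
  have ht : IsDyadicOn E (t + 1) := (isDyadicOn_doubledIndicator E _).add (.const E 1)
  have hb : DyadicModEq E b (t + 1) := choose_bitSum_add_two_pow_modEq hi
  have hb_odd : ∀ A ⊆ E, Odd (b A) := fun A hA =>
    (odd_choose_bitSum_add_two_pow fun h => (hi i (hA h)).false).natCast
  refine .mul_left_cancel (hb.isDyadicOn ht) hb_odd ?_
  calc b * (fun A => ((bitSum E + 2 ^ i).choose (bitSum A + 2 ^ i) : ℤ))
    _ = f * fun _ => b E := by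
      ext A
      have := Nat.choose_mul (n := bitSum E + 2 ^ i) (Nat.le_add_left (2 ^ i) (bitSum A))
      simp only [Nat.add_sub_cancel] at this
      simp only [Pi.mul_apply, b, f]
      rw [mul_comm, mul_comm ((bitSum E).choose _ : ℤ)]
      exact_mod_cast this
    DyadicModEq E _ (f * 1) := .mul_left hf (.const_odd (hb_odd E Subset.rfl))
    DyadicModEq E _ (f * ((t + 1) * (t + 1))) :=
      .mul_left hf (doubledIndicator_add_one_sq_modEq E (i + 1)).symm
    _ = f * (t + 1) * (t + 1) := (mul_assoc _ _ _).symm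
    DyadicModEq E _ (f * (t + 1) * b) := .mul_left (hf.mul ht) hb.symm
    _ = b * (f * (t + 1)) := mul_comm _ _

lemma choose_bitSum_insert_modEq_left (hi : ∀ j ∈ E, i < j)
    (hf : IsDyadicOn E fun A => (bitSum E).choose (bitSum A)) :
    DyadicModEq E (fun A => (bitSum E + 2 ^ i).choose (bitSum A))
      ((fun A => ((bitSum E).choose (bitSum A) : ℤ)) * (doubledIndicator (i + 1) + 1)) := by
  set t : Finset ℕ → ℤ := doubledIndicator (i + 1)
  set f : Finset ℕ → ℤ := fun A => (bitSum E).choose (bitSum A)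
  have choose_symm : ∀ A ⊆ E, (bitSum E + 2 ^ i).choose (bitSum A) =
      (bitSum E + 2 ^ i).choose (bitSum (E \ A) + 2 ^ i) := fun A hA =>
    Nat.choose_symm_of_eq_add (by rw [← bitSum_sdiff_add hA]; ring)
  calc DyadicModEq E _ (fun A => ((bitSum E + 2 ^ i).choose (bitSum (E \ A) + 2 ^ i) : ℤ)) :=
      .of_eq fun A hA => by rw [choose_symm A hA]
    DyadicModEq E _ fun A => f (E \ A) * (t (E \ A) + 1) :=
      (choose_bitSum_insert_modEq hi hf).comp_sdiff
    DyadicModEq E _ (f * ((fun A => t (E \ A)) + 1)) :=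
      .of_eq fun A hA => by simp only [f, choose_bitSum_sdiff hA]; rfl
    DyadicModEq E _ (f * (t + 1)) :=
      .mul_left hf ((doubledIndicator_sdiff_modEq E (i + 1)).add_right 1)

lemma isDyadicOn_choose_bitSum (E : Finset ℕ) :
    IsDyadicOn E fun A => (bitSum E).choose (bitSum A) := by
  induction E using Finset.induction_on_min with
  | empty => exact isDyadicOn_empty _
  | insert i E hi ih =>
    have hiE : i ∉ E := fun h => (hi i h).false
    have hleft := choose_bitSum_insert_modEq_left hi ih
    obtain ⟨g, hg, hdiff⟩ := (choose_bitSum_insert_modEq hi ih).trans hleft.symm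
    simp only [bitSum_insert hiE]
    refine (isDyadicOn_insert hiE).2 ⟨hleft.isDyadicOn
      (ih.mul ((isDyadicOn_doubledIndicator E _).add (.const E 1))), g, hg, fun A hA => ?_⟩
    rw [bitSum_insert (notMem_mono hA hiE)]
    exact hdiff A hA

/-- The sum of the odd entries of row `bitSum E` of Pascal's triangle, see
`odd_choose_bitSum_iff`. -/
def rowSum (E : Finset ℕ) : ℕ := ∑ A ∈ E.powerset, (bitSum E).choose (bitSum A)

lemma two_pow_card_dvd_rowSum (E : Finset ℕ) : 2 ^ #E ∣ rowSum E := by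
  have := (isDyadicOn_choose_bitSum E).two_pow_card_dvd_sum
  exact_mod_cast this

lemma sum_powerset_sdiff {M : Type*} [AddCommMonoid M] (E : Finset ℕ) (f : Finset ℕ → M) :
    ∑ A ∈ E.powerset, f (E \ A) = ∑ A ∈ E.powerset, f A :=
  sum_nbij' (E \ ·) (E \ ·) (by simp) (by simp) (by simp_all) (by simp_all) (by simp)

lemma rowSum_insert (hi : i ∉ E) : rowSum (insert i E) =
    2 * ∑ A ∈ E.powerset, (bitSum E + 2 ^ i).choose (bitSum A + 2 ^ i) := by
  rw [rowSum, sum_powerset_insert hi, two_mul, bitSum_insert hi, ← sum_powerset_sdiff]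
  congr 1
  · refine sum_congr rfl fun A hA => Nat.choose_symm_of_eq_add ?_
    rw [← bitSum_sdiff_add (mem_powerset.1 hA)]
    ring
  · exact sum_congr rfl fun A hA => by rw [bitSum_insert (notMem_mono (mem_powerset.1 hA) hi)]

lemma two_mul_sum_choose_mul_doubledIndicator (E : Finset ℕ) (j : ℕ) :
    2 * ∑ A ∈ E.powerset, ((bitSum E).choose (bitSum A) : ℤ) * doubledIndicator j A =
      doubledIndicator j E * rowSum E := by
  have sum_reflect := sum_powerset_sdiff E fun A =>
    ((bitSum E).choose (bitSum A) : ℤ) * doubledIndicator j A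
  rw [two_mul, ← congr_arg (· + _) sum_reflect, ← sum_add_distrib, rowSum, Nat.cast_sum, mul_sum]
  refine sum_congr rfl fun A hA => ?_
  rw [choose_bitSum_sdiff (mem_powerset.1 hA), ← mul_add,
    doubledIndicator_sdiff_add (mem_powerset.1 hA), mul_comm]

lemma rowSum_insert_modEq (hi : ∀ j ∈ E, i < j) : (rowSum (insert i E) : ℤ) ≡
    (2 + doubledIndicator (i + 1) E) * rowSum E [ZMOD 2 * 2 ^ (#E + 1)] := by
  have := (choose_bitSum_insert_modEq hi (isDyadicOn_choose_bitSum E)).sum_modEq.mul_left' (c := 2)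
  rw [rowSum_insert fun h => (hi i h).false, add_mul,
    ← two_mul_sum_choose_mul_doubledIndicator, rowSum]
  push_cast
  simpa only [Pi.mul_apply, Pi.add_apply, Pi.one_apply, mul_add, mul_one, sum_add_distrib,
    add_comm] using this

/-- The cofactor of `2 ^ #E` in `rowSum E`; the division is exact by `two_pow_card_dvd_rowSum`. -/
def rowQuot (E : Finset ℕ) : ℕ := rowSum E / 2 ^ #E

lemma rowSum_eq (E : Finset ℕ) : rowSum E = 2 ^ #E * rowQuot E :=
  (Nat.mul_div_cancel' (two_pow_card_dvd_rowSum E)).symm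

/-- A set of naturals without two consecutive elements. -/
def Sparse (E : Finset ℕ) : Prop := ∀ i ∈ E, i + 1 ∉ E

instance : DecidablePred Sparse := fun E =>
  inferInstanceAs (Decidable (∀ i ∈ E, i + 1 ∉ E))

lemma sparse_insert (hi : ∀ j ∈ E, i < j) : Sparse (insert i E) ↔ i + 1 ∉ E ∧ Sparse E := by
  have succ_ne : ∀ j ∈ E, j + 1 ≠ i := fun j hj => ((hi j hj).trans j.lt_succ_self).ne'
  rw [Sparse, forall_mem_insert]
  simp only [mem_insert, not_or, Nat.succ_ne_self, not_false_eq_true, true_and]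
  exact and_congr_right fun _ => forall₂_congr fun j hj => and_iff_right (succ_ne j hj)

lemma odd_rowQuot_insert (hi : ∀ j ∈ E, i < j) :
    Odd (rowQuot (insert i E)) ↔ i + 1 ∉ E ∧ Odd (rowQuot E) := by
  have hmod : (rowQuot (insert i E) : ℤ) ≡
      (1 + if i + 1 ∈ E then 1 else 0) * rowQuot E [ZMOD 2] := by
    refine Int.ModEq.mul_left_cancel' (c := 2 ^ (#E + 1)) (by positivity) ?_
    convert rowSum_insert_modEq hi using 1
    · ring
    · rw [rowSum_eq, card_insert_of_notMem fun h => (hi i h).false]; push_cast; ring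
    · rw [rowSum_eq, doubledIndicator]; push_cast; split_ifs <;> ring
  rw [← Int.odd_coe_nat, Int.odd_iff, hmod, ← Int.odd_iff, Int.odd_mul, Int.odd_coe_nat]
  refine and_congr_left fun _ => ?_
  split_ifs with h <;> simp [h]

lemma odd_rowQuot_iff (E : Finset ℕ) : Odd (rowQuot E) ↔ Sparse E := by
  induction E using Finset.induction_on_min with
  | empty => simp [rowQuot, rowSum, bitSum, Sparse]
  | insert i E hi ih => rw [odd_rowQuot_insert hi, sparse_insert hi, ih]

end Binomial

section Multinomial

/-- The sum of the odd `m`-nomial coefficients with `n` at the top. -/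
def oddMultinomialSum (m n : ℕ) : ℕ :=
  ∑ x ∈ Nat.antidiagonalTuple m n with Odd (Nat.multinomial univ x), Nat.multinomial univ x

lemma multinomial_fin_cons {m : ℕ} (a : ℕ) (y : Fin m → ℕ) :
    Nat.multinomial univ (Fin.cons a y : Fin (m + 1) → ℕ) =
      (a + ∑ i, y i).choose a * Nat.multinomial univ y := by
  have hcons := Nat.multinomial_spec univ (Fin.cons a y : Fin (m + 1) → ℕ)
  rw [Fin.prod_univ_succ, Fin.sum_univ_succ] at hcons
  simp only [Fin.cons_zero, Fin.cons_succ] at hcons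
  refine Nat.eq_of_mul_eq_mul_left
    (Nat.mul_pos a.factorial_pos (prod_pos (s := univ) fun i _ => (y i).factorial_pos)) ?_
  rw [hcons, Nat.choose_symm_add, ← Nat.add_choose_mul_factorial_mul_factorial,
    ← Nat.multinomial_spec univ y]
  ring

lemma sum_antidiagonalTuple_succ {M : Type*} [AddCommMonoid M] {m : ℕ} (n : ℕ)
    (f : (Fin (m + 1) → ℕ) → M) : ∑ x ∈ Nat.antidiagonalTuple (m + 1) n, f x =
      ∑ p ∈ antidiagonal n, ∑ y ∈ Nat.antidiagonalTuple m p.2, f (Fin.cons p.1 y) := by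
  rw [sum_sigma']
  refine sum_bij' (fun x _ => ⟨(x 0, ∑ i, Fin.tail x i), Fin.tail x⟩)
    (fun q _ => Fin.cons q.1.1 q.2) ?_ ?_ ?_ ?_ ?_
  · intro x hx
    simpa [Nat.mem_antidiagonalTuple, Fin.sum_univ_succ, Fin.tail] using hx
  · rintro ⟨p, y⟩ hq
    simp only [mem_sigma, HasAntidiagonal.mem_antidiagonal, Nat.mem_antidiagonalTuple] at hq
    simp [Nat.mem_antidiagonalTuple, Fin.sum_univ_succ, hq]
  · simp
  · rintro ⟨⟨a, b⟩, y⟩ hq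
    simp only [mem_sigma, Nat.mem_antidiagonalTuple] at hq
    simp [hq.2]
  · simp

lemma oddMultinomialSum_succ (m n : ℕ) : oddMultinomialSum (m + 1) n =
    ∑ p ∈ antidiagonal n with Odd (n.choose p.1), n.choose p.1 * oddMultinomialSum m p.2 := by
  simp only [oddMultinomialSum, sum_filter, sum_antidiagonalTuple_succ, multinomial_fin_cons]
  refine sum_congr rfl fun p hp => ?_
  rw [← ite_zero_mul, mul_sum]
  refine sum_congr rfl fun y hy => ?_
  rw [Nat.mem_antidiagonalTuple.1 hy, HasAntidiagonal.mem_antidiagonal.1 hp, ite_zero_mul_ite_zero]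
  simp only [Nat.odd_mul]

end Multinomial

section Convolution

variable {F G : Finset ℕ → ℕ} {E : Finset ℕ}

/-- The binomial convolution of two functions on finite sets of bit positions. Only the
odd binomial coefficients of row `bitSum E` contribute, see `odd_choose_bitSum_iff`. -/
def oddConv (F G : Finset ℕ → ℕ) (E : Finset ℕ) : ℕ :=
  ∑ A ∈ E.powerset, (bitSum E).choose (bitSum A) * F A * G (E \ A)

lemma oddConv_one_one : oddConv 1 1 = rowSum := by
  ext E
  simp [oddConv, rowSum]

lemma oddConv_empty (F G : Finset ℕ → ℕ) : oddConv F G ∅ = F ∅ * G ∅ := by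
  simp [oddConv]

lemma oddConv_comm (F G : Finset ℕ → ℕ) : oddConv F G = oddConv G F := by
  ext E
  rw [oddConv, ← sum_powerset_sdiff]
  refine sum_congr rfl fun A hA => ?_
  have hA := mem_powerset.1 hA
  rw [choose_bitSum_sdiff hA, Finset.sdiff_sdiff_eq_self hA, mul_right_comm]

lemma choose_bitSum_mul_choose_bitSum_sdiff {A B : Finset ℕ} (hA : A ⊆ E) (hB : B ⊆ E) :
    (bitSum E).choose (bitSum A) * (bitSum (E \ A)).choose (bitSum B) =
      (bitSum E).choose (bitSum B) * (bitSum (E \ B)).choose (bitSum A) := by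
  have hE := Nat.choose_mul (n := bitSum E) (Nat.le_add_right (bitSum A) (bitSum B))
  have hE' := Nat.choose_mul (n := bitSum E) (Nat.le_add_left (bitSum B) (bitSum A))
  rw [Nat.add_sub_cancel_left, ← Nat.eq_sub_of_add_eq (bitSum_sdiff_add hA)] at hE
  rw [Nat.add_sub_cancel, ← Nat.eq_sub_of_add_eq (bitSum_sdiff_add hB)] at hE'
  rw [← hE, ← hE', Nat.choose_symm_add]

lemma oddConv_left_comm (F G H : Finset ℕ → ℕ) :
    oddConv F (oddConv G H) = oddConv G (oddConv F H) := by
  ext E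
  simp only [oddConv, mul_sum]
  rw [sum_comm' (t' := E.powerset) (s' := fun B => (E \ B).powerset)]
  · refine sum_congr rfl fun B hB => sum_congr rfl fun A hA => ?_
    have := choose_bitSum_mul_choose_bitSum_sdiff ((mem_powerset.1 hA).trans sdiff_subset)
      (mem_powerset.1 hB)
    rw [sdiff_right_comm]
    linear_combination F A * G B * H ((E \ B) \ A) * this
  · simp only [mem_powerset, subset_sdiff]
    intro A B
    rw [disjoint_comm]
    tauto

lemma oddConv_assoc (F G H : Finset ℕ → ℕ) :
    oddConv (oddConv F G) H = oddConv F (oddConv G H) := by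
  rw [oddConv_comm, oddConv_left_comm, oddConv_comm H G]

lemma oddConv_two_pow_card_mul (F G : Finset ℕ → ℕ) (E : Finset ℕ) :
    oddConv (fun A => 2 ^ #A * F A) (fun A => 2 ^ #A * G A) E = 2 ^ #E * oddConv F G E := by
  rw [oddConv, oddConv, mul_sum]
  refine sum_congr rfl fun A hA => ?_
  rw [← card_sdiff_add_card_eq_card (mem_powerset.1 hA)]
  ring

/-- The `k`-th power of `F` for the convolution `oddConv`. -/
def oddConvPow (F : Finset ℕ → ℕ) (k : ℕ) : Finset ℕ → ℕ := (oddConv F)^[k] (Pi.single ∅ 1)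

lemma oddConvPow_zero (F : Finset ℕ → ℕ) : oddConvPow F 0 = Pi.single ∅ 1 := rfl

lemma oddConvPow_succ (F : Finset ℕ → ℕ) (k : ℕ) :
    oddConvPow F (k + 1) = oddConv F (oddConvPow F k) :=
  Function.iterate_succ_apply' _ _ _

lemma oddConvPow_empty (F : Finset ℕ → ℕ) (k : ℕ) : oddConvPow F k ∅ = F ∅ ^ k := by
  induction k with
  | zero => simp [oddConvPow_zero]
  | succ k ih => rw [oddConvPow_succ, oddConv_empty, ih, pow_succ']

lemma oddConvPow_one_two_mul (k : ℕ) : oddConvPow 1 (2 * k) = oddConvPow rowSum k := by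
  have : (oddConv 1)^[2] = oddConv rowSum := by
    ext G : 1
    rw [← oddConv_one_one, oddConv_assoc]
    rfl
  rw [oddConvPow, Function.iterate_mul, this, oddConvPow]

lemma oddConvPow_rowSum (k : ℕ) (E : Finset ℕ) :
    oddConvPow rowSum k E = 2 ^ #E * oddConvPow rowQuot k E := by
  induction k generalizing E with
  | zero => obtain rfl | hE := eq_or_ne E ∅ <;> simp [oddConvPow_zero, *]
  | succ k ih =>
    rw [oddConvPow_succ, oddConvPow_succ, ← oddConv_two_pow_card_mul, ← funext rowSum_eq,
      ← funext ih]

lemma sum_antidiagonal_bitSum_odd_choose {M : Type*} [AddCommMonoid M] (E : Finset ℕ)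
    (f : ℕ × ℕ → M) :
    ∑ p ∈ antidiagonal (bitSum E) with Odd ((bitSum E).choose p.1), f p =
      ∑ A ∈ E.powerset, f (bitSum A, bitSum (E \ A)) := by
  symm
  refine sum_nbij (fun A => (bitSum A, bitSum (E \ A))) ?_ ?_ ?_ fun _ _ => rfl
  · intro A hA
    have hA := mem_powerset.1 hA
    have hsum : bitSum A + bitSum (E \ A) = bitSum E := by rw [add_comm, bitSum_sdiff_add hA]
    simp [odd_choose_bitSum_iff, hA, hsum]
  · exact fun A _ B _ h => bitSum_injective (congr_arg Prod.fst h)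
  · rintro ⟨a, b⟩ hp
    obtain ⟨A, rfl⟩ := exists_bitSum_eq a
    simp only [coe_filter, Set.mem_ofPred_eq, HasAntidiagonal.mem_antidiagonal,
      odd_choose_bitSum_iff] at hp
    refine ⟨A, by simpa using hp.2, ?_⟩
    have := bitSum_sdiff_add hp.2
    simp only [Prod.mk.injEq, true_and]
    lia

lemma oddMultinomialSum_bitSum (m : ℕ) (E : Finset ℕ) :
    oddMultinomialSum m (bitSum E) = oddConvPow 1 m E := by
  induction m generalizing E with
  | zero =>
    obtain rfl | hE := eq_or_ne E ∅
    · simp [oddMultinomialSum, oddConvPow, bitSum]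
    · have : bitSum E ≠ 0 := bitSum_injective.ne (a₂ := ∅) hE
      obtain ⟨n, hn⟩ := Nat.exists_eq_succ_of_ne_zero this
      simp [oddMultinomialSum, oddConvPow, hn, hE]
  | succ m ih =>
    rw [oddMultinomialSum_succ, sum_antidiagonal_bitSum_odd_choose, oddConvPow_succ, oddConv]
    simp only [ih, Pi.one_apply, mul_one]

lemma oddMultinomialSum_two_mul_bitSum (k : ℕ) (E : Finset ℕ) :
    oddMultinomialSum (2 * k) (bitSum E) = 2 ^ #E * oddConvPow rowQuot k E := by
  rw [oddMultinomialSum_bitSum, oddConvPow_one_two_mul, oddConvPow_rowSum]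

/-- The restriction of `F` to the sets containing the marked position `j`, extended by zero.
It plays the role of a derivation of the convolution `oddConv`. -/
def mark (j : ℕ) (F : Finset ℕ → ℕ) (A : Finset ℕ) : ℕ := if j ∈ A then F A else 0

lemma mark_oddConv (j : ℕ) (F G : Finset ℕ → ℕ) :
    mark j (oddConv F G) = oddConv (mark j F) G + oddConv F (mark j G) := by
  ext E
  simp only [mark, oddConv, Pi.add_apply, ← sum_add_distrib]
  split_ifs with hj
  · refine sum_congr rfl fun A _ => ?_
    by_cases hjA : j ∈ A <;> simp [hj, hjA]
  · refine (sum_eq_zero fun A hA => ?_).symm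
    simp [hj, notMem_mono (mem_powerset.1 hA) hj]

lemma mark_oddConvPow_succ (j : ℕ) (F : Finset ℕ → ℕ) (k : ℕ) :
    mark j (oddConvPow F (k + 1)) = (k + 1) • oddConv (mark j F) (oddConvPow F k) := by
  induction k with
  | zero =>
    have : mark j (oddConvPow F 0) = 0 := by
      ext A
      obtain rfl | hA := eq_or_ne A ∅ <;> simp [mark, oddConvPow_zero, *]
    rw [oddConvPow_succ, mark_oddConv, this, zero_add, one_smul, add_eq_left]
    ext E
    simp [oddConv]
  | succ k ih =>
    have oddConv_smul : ∀ G, oddConv F ((k + 1) • G) = (k + 1) • oddConv F G := fun G => by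
      ext E
      simp only [oddConv, Pi.smul_apply, smul_eq_mul, mul_sum]
      exact sum_congr rfl fun A _ => mul_left_comm _ _ _
    rw [oddConvPow_succ, mark_oddConv, ih, oddConv_smul, oddConv_left_comm, ← oddConvPow_succ,
      ← succ_nsmul']

lemma oddConvPow_succ_of_mem {j : ℕ} (hj : j ∈ E) (F : Finset ℕ → ℕ) (k : ℕ) :
    oddConvPow F (k + 1) E = (k + 1) * oddConv (mark j F) (oddConvPow F k) E := by
  have := congr_fun (mark_oddConvPow_succ j F k) E
  rwa [mark, if_pos hj] at this

lemma odd_oddConv_iff : Odd (oddConv F G E) ↔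
    Odd #{A ∈ E.powerset | Odd (F A) ∧ Odd (G (E \ A))} := by
  rw [oddConv, odd_sum_iff_odd_card_odd]
  refine iff_of_eq (congr_arg (Odd #·) (filter_congr fun A hA => ?_))
  simp [Nat.odd_mul, odd_choose_bitSum_iff, mem_powerset.1 hA]

lemma odd_oddConv_iff_of_right (hG : ∀ A, Odd (G A) ↔ A = ∅) :
    Odd (oddConv F G E) ↔ Odd (F E) := by
  have : {A ∈ E.powerset | Odd (F A) ∧ Odd (G (E \ A))} =
      {A ∈ ({E} : Finset (Finset ℕ)) | Odd (F A)} := by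
    ext A
    simp only [mem_filter, mem_powerset, mem_singleton, hG, sdiff_eq_empty_iff_subset]
    rw [and_left_comm, ← subset_antisymm_iff, and_comm]
  rw [odd_oddConv_iff, this, filter_singleton]
  split_ifs with h <;> simp [h]

lemma odd_oddConvPow_iff_of_even {k : ℕ} (hF : Odd (F ∅)) (hk : Even k) :
    Odd (oddConvPow F k E) ↔ E = ∅ := by
  obtain rfl | ⟨j, hj⟩ := E.eq_empty_or_nonempty
  · simp [oddConvPow_empty, hF.pow]
  · cases k with
    | zero => simp [oddConvPow_zero, ne_empty_of_mem hj]
    | succ k => simp [oddConvPow_succ_of_mem hj, ne_empty_of_mem hj, hk.mul_right]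

lemma odd_oddConvPow_iff_of_odd {k : ℕ} (hF : Odd (F ∅)) (hk : Odd k) :
    Odd (oddConvPow F k E) ↔ Odd (F E) := by
  obtain ⟨m, rfl⟩ := hk
  rw [oddConvPow_succ]
  exact odd_oddConv_iff_of_right fun A => odd_oddConvPow_iff_of_even hF (even_two_mul m)

end Convolution

section Parity

variable {i : ℕ} {E : Finset ℕ}

/-- The number of ways to split `insert i E` into two sparse sets, the first of which contains
`i`. -/
def sparseSplitCount (i : ℕ) (E : Finset ℕ) : ℕ :=
  #{A ∈ E.powerset | Sparse (insert i A) ∧ Sparse (E \ A)}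

lemma card_filter_powerset_insert {P : Finset ℕ → Prop} [DecidablePred P] (hi : i ∉ E) :
    #{A ∈ (insert i E).powerset | P A} =
      #{A ∈ E.powerset | P A} + #{A ∈ E.powerset | P (insert i A)} := by
  simp only [card_filter, sum_powerset_insert hi]

lemma card_filter_powerset_sdiff {P : Finset ℕ → Prop} [DecidablePred P] :
    #{A ∈ E.powerset | P (E \ A)} = #{A ∈ E.powerset | P A} := by
  simp only [card_filter, sum_powerset_sdiff E fun A => if P A then 1 else 0]

lemma sparseSplitCount_insert {e : ℕ} (hi : i < e) (he : ∀ j ∈ E, e < j) :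
    sparseSplitCount i (insert e E) =
      sparseSplitCount e E + if e = i + 1 then 0 else sparseSplitCount e E := by
  have he' : e ∉ E := fun h => (he e h).false
  rw [sparseSplitCount, card_filter_powerset_insert he']
  congr 1
  · rw [← card_filter_powerset_sdiff, sparseSplitCount]
    refine congr_arg card (filter_congr fun A hA => ?_)
    have hA := mem_powerset.1 hA
    have hlt : ∀ j ∈ E \ A, i < j := fun j hj => hi.trans (he j (mem_sdiff.1 hj).1)
    have hsucc : i + 1 ∉ E \ A := fun h => (he _ (mem_sdiff.1 h).1).not_ge hi
    have hsdiff : insert e E \ (E \ A) = insert e A := by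
      rw [insert_sdiff_of_notMem _ fun h => he' (mem_sdiff.1 h).1, Finset.sdiff_sdiff_eq_self hA]
    rw [sparse_insert hlt, hsdiff, and_iff_right hsucc, and_comm]
  · have hinsert : ∀ A ∈ E.powerset,
        (Sparse (insert i (insert e A)) ∧ Sparse (insert e E \ insert e A) ↔
          e ≠ i + 1 ∧ Sparse (insert e A) ∧ Sparse (E \ A)) := fun A hA => by
      have hA := mem_powerset.1 hA
      have hlt : ∀ j ∈ insert e A, i < j :=
        (forall_mem_insert _ _ _).2 ⟨hi, fun j hj => hi.trans (he j (hA hj))⟩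
      have hsucc : i + 1 ∉ A := fun h => (he _ (hA h)).not_ge hi
      rw [sparse_insert hlt, insert_sdiff_insert, sdiff_insert_of_notMem he', mem_insert,
        or_iff_left hsucc, and_assoc, eq_comm]
    rw [filter_congr hinsert]
    split_ifs with h <;> simp [h, sparseSplitCount]

lemma card_filter_sparse_split_insert (hi : i ∉ E) :
    #{A ∈ (insert i E).powerset | (i ∈ A ∧ Sparse A) ∧ Sparse (insert i E \ A)} =
      sparseSplitCount i E := by
  rw [card_filter_powerset_insert hi, filter_false_of_mem, card_empty, zero_add, sparseSplitCount]
  · refine congr_arg card (filter_congr fun A _ => ?_)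
    rw [insert_sdiff_insert, sdiff_insert_of_notMem hi, and_iff_right (mem_insert_self i A)]
  · exact fun A hA h => hi (mem_powerset.1 hA h.1.1)

lemma exists_insert_eq_Ico_iff {a : ℕ} (hi : ∀ j ∈ E, i < j) :
    (∃ c, insert i E = Ico a c) ↔ i = a ∧ ∃ c, E = Ico (i + 1) c := by
  constructor
  · rintro ⟨c, hc⟩
    have hic : a ≤ i ∧ i < c := mem_Ico.1 (hc ▸ mem_insert_self i E)
    have ha : a ∈ insert i E := hc ▸ mem_Ico.2 ⟨le_rfl, hic.1.trans_lt hic.2⟩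
    have hia : i = a := by
      rcases mem_insert.1 ha with h | h
      · exact h.symm
      · exact absurd (hi a h) hic.1.not_gt
    refine ⟨hia, c, ?_⟩
    rw [← erase_insert fun h => (hi i h).false, hc, hia, Ico_erase_left, Ico_add_one_left_eq_Ioo]
  · rintro ⟨rfl, c, rfl⟩
    obtain hc | hc := lt_or_ge i c
    · exact ⟨c, insert_Ico_add_one_left_eq_Ico hc⟩
    · exact ⟨i + 1, by simp [hc.trans (Nat.le_succ i)]⟩

lemma odd_sparseSplitCount_iff (hi : ∀ j ∈ E, i < j) :
    Odd (sparseSplitCount i E) ↔ ∃ c, E = Ico (i + 1) c := by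
  induction E using Finset.induction_on_min generalizing i with
  | empty =>
    refine iff_of_true ?_ ⟨0, by simp⟩
    simp [sparseSplitCount, Sparse, filter_singleton]
  | insert e E he ih =>
    rw [sparseSplitCount_insert (hi e (mem_insert_self e E)) he, exists_insert_eq_Ico_iff he,
      ← ih he]
    split_ifs with h <;> simp [h]

lemma odd_card_sparse_split_iff (hi : ∀ j ∈ E, i < j) :
    Odd #{A ∈ (insert i E).powerset | (i ∈ A ∧ Sparse A) ∧ Sparse (insert i E \ A)} ↔
      ∃ a c, insert i E = Ico a c := by
  simp only [card_filter_sparse_split_insert fun h => (hi i h).false, odd_sparseSplitCount_iff hi,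
    exists_insert_eq_Ico_iff hi, exists_eq_left']

lemma exists_oddMultinomialSum_two_mul_bitSum_eq {k : ℕ} (hk : 0 < k) (hE : E.Nonempty) :
    ∃ q, oddMultinomialSum (2 * k) (bitSum E) = 2 ^ #E * (k * q) ∧
      (Odd k → (Odd q ↔ Sparse E)) ∧ (Even k → (Odd q ↔ ∃ a c, E = Ico a c)) := by
  obtain ⟨k, rfl⟩ := Nat.exists_eq_add_one.2 hk
  obtain ⟨i, F, hi, rfl⟩ : ∃ i F, (∀ j ∈ F, i < j) ∧ insert i F = E :=
    ⟨E.min' hE, E.erase (E.min' hE), fun _ => E.min'_lt_of_mem_erase_min' hE,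
      insert_erase (E.min'_mem hE)⟩
  have hiE : i ∈ insert i F := mem_insert_self i F
  have odd_rowQuot_empty : Odd (rowQuot ∅) := (odd_rowQuot_iff ∅).2 (by simp [Sparse])
  refine ⟨oddConv (mark i rowQuot) (oddConvPow rowQuot k) (insert i F), ?_, fun hodd => ?_,
    fun heven => ?_⟩
  · rw [oddMultinomialSum_two_mul_bitSum, oddConvPow_succ_of_mem hiE]
  · have hk : Even k := by simpa [Nat.odd_add_one] using hodd
    rw [odd_oddConv_iff_of_right fun A => odd_oddConvPow_iff_of_even odd_rowQuot_empty hk, mark,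
      if_pos hiE, odd_rowQuot_iff]
  · have hk : Odd k := by simpa [Nat.even_add_one] using heven
    rw [odd_oddConv_iff, ← odd_card_sparse_split_iff hi]
    refine iff_of_eq (congr_arg (Odd #·) (filter_congr fun A _ => ?_))
    rw [odd_oddConvPow_iff_of_odd odd_rowQuot_empty hk, odd_rowQuot_iff, mark]
    split_ifs with h <;> simp [h, odd_rowQuot_iff]

lemma oddMultinomialSum_pos {m : ℕ} (hm : 0 < m) (n : ℕ) : 0 < oddMultinomialSum m n := by
  have : NeZero m := ⟨hm.ne'⟩
  have hone : Nat.multinomial univ (Pi.single 0 n : Fin m → ℕ) = 1 := Nat.multinomial_single _ _ _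
  refine sum_pos (fun x _ => Nat.multinomial_pos _ _) ⟨Pi.single 0 n, ?_⟩
  simp [Nat.mem_antidiagonalTuple, hone]

lemma exists_bitSum_eq_iff (hE : E.Nonempty) :
    (∃ a b, 0 < b ∧ bitSum E = 2 ^ a * (2 ^ b - 1)) ↔ ∃ a c, E = Ico a c := by
  simp only [← bitSum_Ico, bitSum_injective.eq_iff]
  constructor
  · rintro ⟨a, b, -, rfl⟩
    exact ⟨a, a + b, rfl⟩
  · rintro ⟨a, c, rfl⟩
    have hac := nonempty_Ico.1 hE
    exact ⟨a, c - a, Nat.sub_pos_of_lt hac, by rw [Nat.add_sub_cancel' hac.le]⟩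

end Parity

theorem stmt_14 (k n : ℕ) (hk : 0 < k) (hn : 0 < n)
    (S : ℕ)
    (hS : S = ∑ x ∈ (Finset.Nat.antidiagonalTuple (2 * k) n).filter
        (fun x => Odd (Nat.multinomial Finset.univ x)),
      Nat.multinomial Finset.univ x) :
    s2 n + padicValNat 2 k ≤ padicValNat 2 S ∧
      (Odd k →
        (padicValNat 2 S = s2 n + padicValNat 2 k ↔
          ∀ i : ℕ, ¬(n.testBit i = true ∧ n.testBit (i + 1) = true))) ∧
      (Even k →
        (padicValNat 2 S = s2 n + padicValNat 2 k ↔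
          ∃ a b : ℕ, 0 < b ∧ n = 2 ^ a * (2 ^ b - 1))) := by
  obtain ⟨E, rfl⟩ := exists_bitSum_eq n
  have hE : E.Nonempty := nonempty_iff_ne_empty.2 fun h => by simp [h, bitSum] at hn
  obtain ⟨q, hq, hodd, heven⟩ := exists_oddMultinomialSum_two_mul_bitSum_eq hk hE
  have hq0 : q ≠ 0 := by
    have := oddMultinomialSum_pos (Nat.mul_pos two_pos hk) (bitSum E)
    rintro rfl
    simp [hq] at this
  have hval : padicValNat 2 S = s2 (bitSum E) + padicValNat 2 k + padicValNat 2 q := by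
    rw [hS, ← oddMultinomialSum, hq, padicValNat.mul (by positivity) (by positivity),
      padicValNat.mul hk.ne' hq0, padicValNat.prime_pow, s2_bitSum, add_assoc]
  have hval_iff : padicValNat 2 S = s2 (bitSum E) + padicValNat 2 k ↔ Odd q := by
    rw [hval, add_eq_left, padicValNat.eq_zero_iff]
    simp [hq0, Nat.two_dvd_ne_zero, Nat.odd_iff]
  refine ⟨hval ▸ Nat.le_add_right _ _, fun hk => ?_, fun hk => ?_⟩
  · simp only [hval_iff, hodd hk, Sparse, testBit_bitSum, not_and]
  · rw [hval_iff, heven hk, exists_bitSum_eq_iff hE]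
end

section
/- Let n be a positive integer, and let S be the sum of all trinomial coefficients with n at the top which are not divisible by 3, i.e., S = ∑ over all (x, y, z) of nonnegative integers with x+y+z = n and 3 ∤ n!/(x!·y!·z!), of n!/(x!·y!·z!). Then ν₃(S) ≥ s₃*(n), where s₃*(n) is the number of nonzero digits in the ternary expansion of n. Equality holds if and only if the ternary expansion of n begins with 1 (its leading, most significant, digit is 1) and, reading the ternary digits from most significant to least significant, no two consecutive digits form the pattern 1 followed by 1, and no two consecutive digits form the pattern 0 followed by 2. -/
/-- `s3star n` is the number of nonzero digits in the ternary expansion of `n`. -/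
def s3star (n : ℕ) : ℕ := ((Nat.digits 3 n).filter (fun a => a ≠ 0)).length

/-!
For an odd prime `p` and a weight `f` on `p`-tuples, let `T n f` be the sum of the `f v` over the
tuples `v` of total `n`, weighted by the multinomial coefficients prime to `p`. These belong to the
tuples whose entries add up without carry: for `n = p * m + r` with `r < p` they are the
`v = p • x + d` where `x` has total `m` and a coefficient prime to `p`, and `d` has total `r`.
Writing factorials through the `p`-adic gamma function, the coefficient of `v` is that of `x` times
a unit which is `p`-adically Lipschitz in `v`. Hence `T n f = T m f'`, where `f' x` is the sum of
`unit * f (p • x + d)` over `d`. Since `x` is multiplied by `p`, `f'` is constant modulo `p` when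
`f` is Lipschitz, and if `r ≠ 0` and `f` is symmetric, then `p ∣ f' 0` by double counting. So every
nonzero digit of `n` splits off a factor `p`, and `f' / p` is again Lipschitz and symmetric.

Equality depends on `f' / p` modulo `p` for `f = 1`. Expanding the unit to second order in `p`, that
quotient is a unit times `p ^ (r - 1) - E * m`, where `E` is a weighted sum of harmonic numbers with
`r * E ≡ (-1) ^ (r - 1)` modulo `p`. It vanishes modulo `p` exactly when the next digit `m % p` is
`1` if `r = 1`, and `0` if `r ≥ 2`.
-/

open Finset

section SymmetricSums

variable {ι R : Type*}

/-- Functions of a tuple that do not depend on the order of its entries. -/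
def IsSymmetricFun (f : (ι → ℕ) → R) : Prop :=
  ∀ (σ : Equiv.Perm ι) (x : ι → ℕ), f (x ∘ σ) = f x

variable [Fintype ι] [DecidableEq ι]

theorem sum_piAntidiag_comp_perm [AddCommMonoid R] (n : ℕ) (σ : Equiv.Perm ι)
    (F : (ι → ℕ) → R) :
    ∑ d ∈ piAntidiag univ n, F (d ∘ σ) = ∑ d ∈ piAntidiag univ n, F d := by
  refine sum_nbij' (· ∘ σ) (· ∘ σ.symm) ?_ ?_ ?_ ?_ fun _ _ => rfl
  · simp [Equiv.sum_comp σ]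
  · simp [Equiv.sum_comp σ.symm]
  · simp [Function.comp_assoc]
  · simp [Function.comp_assoc]

theorem IsSymmetricFun.sum_mul_apply_eq [CommSemiring R] {F : (ι → ℕ) → R}
    (hF : IsSymmetricFun F) (g : ℕ → R) (n : ℕ) (i j : ι) :
    ∑ d ∈ piAntidiag univ n, F d * g (d i) = ∑ d ∈ piAntidiag univ n, F d * g (d j) := by
  rw [← sum_piAntidiag_comp_perm n (Equiv.swap i j)]
  refine sum_congr rfl fun d _ => ?_
  rw [hF (Equiv.swap i j) d, Function.comp_apply, Equiv.swap_apply_left]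

/-- Double counting: `n * F d = ∑ i, d i * F d`, and every index `i` contributes the same total. -/
theorem IsSymmetricFun.card_dvd_mul_sum [CommSemiring R] {F : (ι → ℕ) → R}
    (hF : IsSymmetricFun F) (n : ℕ) :
    (Fintype.card ι : R) ∣ n * ∑ d ∈ piAntidiag univ n, F d := by
  have double_count : n * ∑ d ∈ piAntidiag univ n, F d =
      ∑ i, ∑ d ∈ piAntidiag univ n, F d * (d i : R) := by
    rw [sum_comm, mul_sum]
    refine sum_congr rfl fun d hd => ?_
    rw [← mul_sum, ← Nat.cast_sum, (mem_piAntidiag.1 hd).1, mul_comm]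
  rw [double_count]
  rcases isEmpty_or_nonempty ι with _ | ⟨⟨j⟩⟩
  · simp
  · rw [sum_congr rfl fun i _ => hF.sum_mul_apply_eq Nat.cast n i j, sum_const, card_univ,
      nsmul_eq_mul]
    exact dvd_mul_right _ _

end SymmetricSums

section PadicLipschitz

variable (p : ℕ) [Fact p.Prime] (ι : Type*)

/-- The functions `f : ℕ ^ ι → ℤ_[p]` with `‖f x - f y‖ ≤ p ^ (-e) * ‖x - y‖`, the norm on the
right being the `p`-adic sup norm. The inequality is encoded by divisibility. -/
def padicLipschitz (e : ℕ) : Subalgebra ℤ_[p] ((ι → ℕ) → ℤ_[p]) where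
  carrier := {f | ∀ (k : ℕ) (x y : ι → ℕ), (∀ i, x i ≡ y i [MOD p ^ k]) →
    (p : ℤ_[p]) ^ (k + e) ∣ f x - f y}
  mul_mem' {f g} hf hg k x y h := by
    have split : (f * g) x - (f * g) y = (f x - f y) * g x + f y * (g x - g y) := by
      simp only [Pi.mul_apply]; ring
    rw [split]
    exact dvd_add ((hf k x y h).mul_right _) ((hg k x y h).mul_left _)
  add_mem' {f g} hf hg k x y h := by
    simpa only [Pi.add_apply, add_sub_add_comm] using dvd_add (hf k x y h) (hg k x y h)
  algebraMap_mem' c k x y _ := by simp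

variable {p ι} {e : ℕ} {f g : (ι → ℕ) → ℤ_[p]}

theorem mem_padicLipschitz : f ∈ padicLipschitz p ι e ↔
    ∀ (k : ℕ) (x y : ι → ℕ), (∀ i, x i ≡ y i [MOD p ^ k]) → (p : ℤ_[p]) ^ (k + e) ∣ f x - f y :=
  Iff.rfl

theorem padicLipschitz_antitone : Antitone (padicLipschitz p ι) :=
  fun _ _ hle _ hf k x y h => (pow_dvd_pow _ (by omega)).trans (hf k x y h)

theorem smul_mem_padicLipschitz_succ_iff :
    (p : ℤ_[p]) • f ∈ padicLipschitz p ι (e + 1) ↔ f ∈ padicLipschitz p ι e := by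
  have hp : (p : ℤ_[p]) ≠ 0 := PadicInt.prime_p.ne_zero
  simp only [mem_padicLipschitz, Pi.smul_apply, smul_eq_mul, ← mul_sub, ← add_assoc, pow_succ',
    mul_dvd_mul_iff_left hp]

theorem mem_padicLipschitz_of_mul_eq_one (hf : f ∈ padicLipschitz p ι e) (hfg : f * g = 1) :
    g ∈ padicLipschitz p ι e := by
  intro k x y h
  have hx : f x * g x = 1 := congrFun hfg x
  have hy : f y * g y = 1 := congrFun hfg y
  have sub_inv : g x - g y = (f x - f y) * (-(g x * g y)) := by
    linear_combination g y * hx - g x * hy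
  exact sub_inv ▸ (hf k x y h).mul_right _

theorem comp_smul_add_mem_padicLipschitz (hf : f ∈ padicLipschitz p ι e) (d : ι → ℕ) :
    (fun x => f (p • x + d)) ∈ padicLipschitz p ι (e + 1) := by
  intro k x y h
  have hscaled : ∀ i, (p • x + d) i ≡ (p • y + d) i [MOD p ^ (k + 1)] := fun i => by
    simpa [pow_succ'] using ((h i).mul_left' p).add_right (d i)
  simpa only [add_assoc, add_comm 1 e] using hf (k + 1) _ _ hscaled

theorem dvd_sub_of_mem_padicLipschitz (hf : f ∈ padicLipschitz p ι (e + 1)) (x y : ι → ℕ) :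
    (p : ℤ_[p]) ∣ f x - f y :=
  (dvd_pow_self _ (by omega)).trans (hf 0 x y fun i => by simp [Nat.modEq_one])

theorem exists_eq_smul_of_mem_padicLipschitz (hf : f ∈ padicLipschitz p ι (e + 1))
    (h0 : (p : ℤ_[p]) ∣ f 0) : ∃ g ∈ padicLipschitz p ι e, f = (p : ℤ_[p]) • g := by
  have hdvd (x : ι → ℕ) : (p : ℤ_[p]) ∣ f x := by
    simpa using dvd_add (dvd_sub_of_mem_padicLipschitz hf x 0) h0
  choose g hg using hdvd
  obtain rfl : f = (p : ℤ_[p]) • g := funext hg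
  exact ⟨g, smul_mem_padicLipschitz_succ_iff.1 hf, rfl⟩

theorem IsSymmetricFun.of_smul {c : ℤ_[p]} (hc : c ≠ 0) (h : IsSymmetricFun (c • f)) :
    IsSymmetricFun f :=
  fun σ x => mul_left_cancel₀ hc (h σ x)

theorem comp_eval_mem_padicLipschitz {u : ℕ → ℤ_[p]}
    (hu : ∀ k m n, m ≡ n [MOD p ^ k] → (p : ℤ_[p]) ^ k ∣ u m - u n) (i : ι) :
    (fun x => u (x i)) ∈ padicLipschitz p ι 0 :=
  fun k _ _ h => hu k _ _ (h i)

theorem padicInt_dvd_natCast_iff {n : ℕ} : (p : ℤ_[p]) ∣ n ↔ p ∣ n := by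
  rw [← PadicInt.norm_lt_one_iff_dvd, PadicInt.norm_natCast_lt_one_iff]

theorem padicInt_pow_dvd_sub_intCast {k : ℕ} {a b : ℤ} (h : (a : ZMod (p ^ k)) = b) :
    (p : ℤ_[p]) ^ k ∣ (a : ℤ_[p]) - b := by
  rw [← Int.cast_sub, PadicInt.pow_p_dvd_int_iff]
  exact_mod_cast (ZMod.intCast_eq_intCast_iff_dvd_sub b a (p ^ k)).1 h.symm

theorem eval_mem_padicLipschitz (i : ι) :
    (fun x : ι → ℕ => (x i : ℤ_[p])) ∈ padicLipschitz p ι 0 :=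
  comp_eval_mem_padicLipschitz (u := Nat.cast) (fun k m n h => by
    simpa using padicInt_pow_dvd_sub_intCast (k := k) (a := m) (b := n)
      (by simpa using (ZMod.natCast_eq_natCast_iff m n (p ^ k)).2 h)) i

end PadicLipschitz

section Wilson

/-- The signed factorial without the multiples of `p`, equal to `-Γ_p (n + 1)` for Morita's
`p`-adic gamma function `Γ_p`. The signs make it `p`-adically continuous. -/
def signedCoprimeFactorial (p n : ℕ) : ℤ :=
  ∏ i ∈ range n, if p ∣ i + 1 then -1 else -((i + 1 : ℕ) : ℤ)

theorem signedCoprimeFactorial_succ (p n : ℕ) : signedCoprimeFactorial p (n + 1) =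
    signedCoprimeFactorial p n * if p ∣ n + 1 then -1 else -((n + 1 : ℕ) : ℤ) :=
  prod_range_succ _ _

theorem factorial_eq_signedCoprimeFactorial (p n : ℕ) :
    (n.factorial : ℤ) =
      (-1) ^ n * signedCoprimeFactorial p n * (p ^ (n / p) * (n / p).factorial) := by
  induction n with
  | zero => simp [signedCoprimeFactorial]
  | succ n ih =>
    rw [Nat.factorial_succ, Nat.cast_mul, ih, signedCoprimeFactorial_succ, Nat.succ_div]
    split_ifs with h
    · have hn : ((n + 1 : ℕ) : ℤ) = p * (n / p + 1 : ℕ) := by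
        rw [← Nat.succ_div_of_dvd h]
        exact_mod_cast (Nat.mul_div_cancel' h).symm
      rw [hn, Nat.factorial_succ]
      push_cast
      ring
    · rw [add_zero]
      ring

variable {p : ℕ} [Fact p.Prime] {k : ℕ}

theorem prod_units_zmod_prime_pow (hp2 : p ≠ 2) (hk : k ≠ 0) :
    ∏ u : (ZMod (p ^ k))ˣ, u = -1 := by
  have hp : p.Prime := Fact.out
  have : Fact (2 < p ^ k) := ⟨(lt_of_le_of_ne hp.two_le hp2.symm).trans_le (Nat.le_self_pow hk p)⟩
  have : IsCyclic (ZMod (p ^ k))ˣ := ZMod.isCyclic_units_of_prime_pow p hp hp2 k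
  have one_ne_neg_one : (1 : (ZMod (p ^ k))ˣ) ≠ -1 := by
    simpa [Units.ext_iff, eq_comm] using ZMod.neg_one_ne_one (n := p ^ k)
  have square_roots : {1, -1} = ({u | u ^ 2 = 1} : Finset (ZMod (p ^ k))ˣ) := by
    refine eq_of_subset_of_card_le (by simp [insert_subset_iff]) ?_
    rw [card_pair one_ne_neg_one]
    exact IsCyclic.card_pow_eq_one_le two_pos
  have pairing : ∏ u ∈ univ \ {1, -1}, (u : (ZMod (p ^ k))ˣ) = 1 := by
    refine prod_involution (fun u _ => u⁻¹) (by simp) (fun u hu _ hinv => ?_)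
      (by simp [inv_eq_iff_eq_inv]) (by simp)
    rw [square_roots, mem_sdiff, mem_filter_univ, pow_two] at hu
    exact hu.2 (inv_eq_iff_mul_eq_one.1 hinv)
  rw [← prod_sdiff (subset_univ {1, -1}), pairing, one_mul, prod_pair one_ne_neg_one, one_mul]

theorem prod_range_zmod_add {M : Type*} [CommMonoid M] (n : ℕ) [NeZero n] (φ : ZMod n → M)
    (a : ZMod n) : ∏ i ∈ range n, φ (a + i) = ∏ b, φ b := by
  rw [← Equiv.prod_comp (Equiv.addLeft a)]
  refine prod_nbij' (fun i => (i : ZMod n)) ZMod.val (by simp) (by simp [ZMod.val_lt])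
    (fun i hi => ZMod.val_cast_of_lt (mem_range.1 hi)) (by simp) (by simp)

theorem signedCoprimeFactorial_add_pow (hp2 : p ≠ 2) (n k : ℕ) :
    (signedCoprimeFactorial p (n + p ^ k) : ZMod (p ^ k)) = signedCoprimeFactorial p n := by
  rcases eq_or_ne k 0 with rfl | hk
  · have : Subsingleton (ZMod (p ^ 0)) := inferInstanceAs (Subsingleton (ZMod 1))
    exact Subsingleton.elim _ _
  let φ : ZMod (p ^ k) → ZMod (p ^ k) := fun a => if IsUnit a then -a else -1
  have factor_eq (i : ℕ) :
      ((if p ∣ n + i + 1 then -1 else -((n + i + 1 : ℕ) : ℤ) : ℤ) : ZMod (p ^ k)) =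
        φ ((n + 1 : ℕ) + i) := by
    have hunit : IsUnit ((n + 1 : ℕ) + i : ZMod (p ^ k)) ↔ ¬ p ∣ n + i + 1 := by
      rw [← Nat.cast_add, ZMod.isUnit_iff_coprime, Nat.coprime_pow_right_iff (by omega),
        Nat.coprime_comm, (Fact.out : p.Prime).coprime_iff_not_dvd, add_right_comm]
    simp only [φ, hunit, ite_not]
    split_ifs <;> push_cast <;> ring
  have units_prod : ∏ b : ZMod (p ^ k), (if IsUnit b then b else 1) = -1 := by
    rw [← prod_filter, ← Units.val_one, ← Units.val_neg, ← prod_units_zmod_prime_pow hp2 hk,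
      Units.coe_prod]
    refine (prod_nbij (fun u : (ZMod (p ^ k))ˣ => (u : ZMod (p ^ k))) (by simp)
      Units.val_injective.injOn (fun b hb => ?_) (by simp)).symm
    obtain ⟨u, rfl⟩ := (mem_filter.1 hb).2
    exact ⟨u, by simp, rfl⟩
  have block_prod : ∏ b, φ b = 1 := by
    have hodd : Odd (p ^ k) := ((Fact.out : p.Prime).odd_of_ne_two hp2).pow
    have hφ (b : ZMod (p ^ k)) : φ b = -1 * if IsUnit b then b else 1 := by
      simp only [φ]; split_ifs <;> simp
    rw [prod_congr rfl fun b _ => hφ b, prod_mul_distrib, units_prod, prod_const, card_univ,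
      ZMod.card, hodd.neg_one_pow, neg_one_mul, neg_neg]
  rw [signedCoprimeFactorial, prod_range_add, ← signedCoprimeFactorial, Int.cast_mul,
    Int.cast_prod, prod_congr rfl fun i _ => factor_eq i, prod_range_zmod_add, block_prod, mul_one]

theorem signedCoprimeFactorial_modEq (hp2 : p ≠ 2) {m n : ℕ} (h : m ≡ n [MOD p ^ k]) :
    (signedCoprimeFactorial p m : ZMod (p ^ k)) = signedCoprimeFactorial p n := by
  have hper : Function.Periodic
      (fun n => (signedCoprimeFactorial p n : ZMod (p ^ k))) (p ^ k) :=
    fun n => signedCoprimeFactorial_add_pow hp2 n k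
  rw [← hper.map_mod_nat m, ← hper.map_mod_nat n, h]

theorem not_dvd_signedCoprimeFactorial (n : ℕ) : ¬ (p : ℤ) ∣ signedCoprimeFactorial p n := by
  have hp : Prime (p : ℤ) := Nat.prime_iff_prime_int.1 Fact.out
  rw [signedCoprimeFactorial, hp.dvd_finsetProd_iff]
  rintro ⟨i, -, hi⟩
  split_ifs at hi with hdvd
  · exact hp.not_dvd_one ((dvd_neg).1 hi)
  · exact hdvd (Int.natCast_dvd_natCast.1 ((dvd_neg).1 hi))

theorem isUnit_signedCoprimeFactorial (n : ℕ) :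
    IsUnit (signedCoprimeFactorial p n : ℤ_[p]) := by
  rw [PadicInt.isUnit_iff, eq_iff_le_not_lt, PadicInt.norm_int_lt_one_iff_dvd]
  exact ⟨PadicInt.norm_le_one _, not_dvd_signedCoprimeFactorial n⟩

end Wilson

section Multinomial

variable {ι : Type*} [Fintype ι] (p : ℕ) (v : ι → ℕ)

theorem sum_eq_mul_sum_div_add_sum_mod :
    ∑ i, v i = p * ∑ i, v i / p + ∑ i, v i % p := by
  rw [mul_sum, ← sum_add_distrib]
  exact sum_congr rfl fun i _ => (Nat.div_add_mod _ _).symm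

theorem prod_factorial_eq_signedCoprimeFactorial :
    ∏ i, ((v i).factorial : ℤ) =
      (-1) ^ (∑ i, v i) * (∏ i, signedCoprimeFactorial p (v i)) *
        (p ^ (∑ i, v i / p) * ∏ i, ((v i / p).factorial : ℤ)) := by
  simp only [← prod_pow_eq_pow_sum, ← prod_mul_distrib, ← factorial_eq_signedCoprimeFactorial]

theorem multinomial_mul_prod_signedCoprimeFactorial :
    (Nat.multinomial univ v : ℤ) * (∏ i, signedCoprimeFactorial p (v i)) *
        (p ^ (∑ i, v i / p) * (∑ i, v i / p).factorial) =
      signedCoprimeFactorial p (∑ i, v i) * Nat.multinomial univ (v · / p) *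
        (p ^ ((∑ i, v i) / p) * ((∑ i, v i) / p).factorial) := by
  have spec : (∏ i, ((v i).factorial : ℤ)) * Nat.multinomial univ v = (∑ i, v i).factorial :=
    mod_cast Nat.multinomial_spec univ v
  have spec_div : (∏ i, ((v i / p).factorial : ℤ)) * Nat.multinomial univ (v · / p) =
      (∑ i, v i / p).factorial := mod_cast Nat.multinomial_spec univ (v · / p)
  rw [prod_factorial_eq_signedCoprimeFactorial p, factorial_eq_signedCoprimeFactorial p] at spec
  have cancel : (-1 : ℤ) ^ (∑ i, v i) * ∏ i, ((v i / p).factorial : ℤ) ≠ 0 :=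
    mul_ne_zero (by simp) (prod_ne_zero_iff.2 fun i _ => mod_cast Nat.factorial_ne_zero _)
  refine mul_left_cancel₀ cancel ?_
  rw [← spec_div]
  linear_combination (∏ i, ((v i / p).factorial : ℤ)) * Nat.multinomial univ (v · / p) * spec

variable {p} [Fact p.Prime] {v}

theorem multinomial_mul_prod_signedCoprimeFactorial_of_sum_mod_lt (h : ∑ i, v i % p < p) :
    (Nat.multinomial univ v : ℤ) * ∏ i, signedCoprimeFactorial p (v i) =
      signedCoprimeFactorial p (∑ i, v i) * Nat.multinomial univ (v · / p) := by
  have hp : 0 < p := (Fact.out : p.Prime).pos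
  have sum_div : (∑ i, v i) / p = ∑ i, v i / p := by
    rw [sum_eq_mul_sum_div_add_sum_mod p v, Nat.mul_add_div hp, Nat.div_eq_of_lt h, add_zero]
  have key := multinomial_mul_prod_signedCoprimeFactorial p v
  rw [sum_div] at key
  exact mul_right_cancel₀ (by positivity) key

theorem not_dvd_prod_signedCoprimeFactorial :
    ¬ (p : ℤ) ∣ ∏ i, signedCoprimeFactorial p (v i) := by
  have hp : Prime (p : ℤ) := Nat.prime_iff_prime_int.1 Fact.out
  rw [hp.dvd_finsetProd_iff]
  rintro ⟨i, -, hi⟩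
  exact not_dvd_signedCoprimeFactorial _ hi

theorem dvd_multinomial_of_le_sum_mod (h : p ≤ ∑ i, v i % p) : p ∣ Nat.multinomial univ v := by
  have hp : Prime (p : ℤ) := Nat.prime_iff_prime_int.1 Fact.out
  have hpos : 0 < p := (Fact.out : p.Prime).pos
  have carry : ∑ i, v i / p + 1 ≤ (∑ i, v i) / p := by
    rw [Nat.le_div_iff_mul_le hpos, sum_eq_mul_sum_div_add_sum_mod p v]
    linarith
  obtain ⟨c, hc⟩ := mul_dvd_mul (pow_dvd_pow (p : ℤ) carry)
    (Int.natCast_dvd_natCast.2 (Nat.factorial_dvd_factorial ((Nat.le_succ _).trans carry)))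
  have key := multinomial_mul_prod_signedCoprimeFactorial p v
  have hdvd : (p : ℤ) ∣ Nat.multinomial univ v * ∏ i, signedCoprimeFactorial p (v i) := by
    refine ⟨signedCoprimeFactorial p (∑ i, v i) * Nat.multinomial univ (v · / p) * c,
      mul_right_cancel₀ (b := (p : ℤ) ^ (∑ i, v i / p) * (∑ i, v i / p).factorial)
        (by positivity) ?_⟩
    rw [key, hc]
    ring
  exact Int.natCast_dvd_natCast.1
    ((hp.dvd_or_dvd hdvd).resolve_right not_dvd_prod_signedCoprimeFactorial)

theorem not_dvd_multinomial_iff : ¬ p ∣ Nat.multinomial univ v ↔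
    ∑ i, v i % p < p ∧ ¬ p ∣ Nat.multinomial univ (v · / p) := by
  rcases le_or_gt p (∑ i, v i % p) with carry | no_carry
  · simp [dvd_multinomial_of_le_sum_mod carry, carry]
  have hp : Prime (p : ℤ) := Nat.prime_iff_prime_int.1 Fact.out
  have key := multinomial_mul_prod_signedCoprimeFactorial_of_sum_mod_lt no_carry
  have dvd_iff := hp.dvd_mul.symm.trans (key ▸ hp.dvd_mul)
  rw [or_iff_left not_dvd_prod_signedCoprimeFactorial,
    or_iff_right (not_dvd_signedCoprimeFactorial _)] at dvd_iff
  simp only [no_carry, true_and, ← Int.natCast_dvd_natCast, dvd_iff]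

end Multinomial

section Digits

variable {p r : ℕ}

theorem digit_induction {P : ℕ → Prop} (hp : 1 < p) (zero : P 0)
    (step : ∀ m r, r < p → 0 < p * m + r → P m → P (p * m + r)) (n : ℕ) : P n := by
  induction n using Nat.strong_induction_on with
  | h n ih =>
    rcases n.eq_zero_or_pos with rfl | hn
    · exact zero
    · rw [← Nat.div_add_mod n p]
      exact step _ _ (Nat.mod_lt _ (by omega)) (by rwa [Nat.div_add_mod])
        (ih _ (Nat.div_lt_self hn hp))

/-- The number of nonzero digits of `n` in base `p`. -/
def nonzeroDigitCount (p n : ℕ) : ℕ := ((p.digits n).filter (· ≠ 0)).length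

theorem nonzeroDigitCount_mul_add (hp : 1 < p) (m : ℕ) (hr : r < p) :
    nonzeroDigitCount p (p * m + r) = nonzeroDigitCount p m + if r = 0 then 0 else 1 := by
  rcases (p * m + r).eq_zero_or_pos with h | h
  · obtain ⟨rfl, rfl⟩ : m = 0 ∧ r = 0 := by
      simpa [show p ≠ 0 by omega] using h
    simp
  · rw [nonzeroDigitCount, nonzeroDigitCount, Nat.digits_def' hp h, Nat.mul_add_mod,
      Nat.mod_eq_of_lt hr, Nat.mul_add_div (by omega), Nat.div_eq_of_lt hr, add_zero,
      List.filter_cons]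
    split_ifs <;> simp_all

end Digits

section MultinomialUnit

variable (p : ℕ) [Fact p.Prime] {ι : Type*} [Fintype ι]

/-- The quotient of the multinomial coefficients of `v` and of `⌊v / p⌋`, for a tuple `v` of total
`n` whose entries are added without carry in base `p`. With `n` as a separate argument it is
`p`-adically Lipschitz in `v`. -/
noncomputable def multinomialUnit (n : ℕ) (v : ι → ℕ) : ℤ_[p] :=
  signedCoprimeFactorial p n * ∏ i, Ring.inverse (signedCoprimeFactorial p (v i) : ℤ_[p])

variable {p}

theorem multinomial_eq_multinomialUnit_mul {v : ι → ℕ} (h : ∑ i, v i % p < p) :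
    (Nat.multinomial univ v : ℤ_[p]) =
      multinomialUnit p (∑ i, v i) v * Nat.multinomial univ (v · / p) := by
  have key := congrArg (Int.cast (R := ℤ_[p]))
    (multinomial_mul_prod_signedCoprimeFactorial_of_sum_mod_lt h)
  have inverse : (∏ i, (signedCoprimeFactorial p (v i) : ℤ_[p])) *
      ∏ i, Ring.inverse (signedCoprimeFactorial p (v i) : ℤ_[p]) = 1 := by
    rw [← prod_mul_distrib]
    exact prod_eq_one fun i _ => Ring.mul_inverse_cancel _ (isUnit_signedCoprimeFactorial _)
  push_cast at key
  rw [multinomialUnit]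
  linear_combination (∏ i, Ring.inverse (signedCoprimeFactorial p (v i) : ℤ_[p])) * key -
    (Nat.multinomial univ v : ℤ_[p]) * inverse

theorem isUnit_multinomialUnit (n : ℕ) (v : ι → ℕ) : IsUnit (multinomialUnit p n v) :=
  (isUnit_signedCoprimeFactorial n).mul <| IsUnit.prod_univ_iff.2 fun i =>
    (isUnit_signedCoprimeFactorial (v i)).ringInverse

theorem isSymmetricFun_multinomialUnit (n : ℕ) :
    IsSymmetricFun (multinomialUnit p n : (ι → ℕ) → ℤ_[p]) := fun σ v => by
  simp only [multinomialUnit, Function.comp_apply]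
  rw [Equiv.prod_comp σ fun i => Ring.inverse (signedCoprimeFactorial p (v i) : ℤ_[p])]

theorem multinomialUnit_mem_padicLipschitz (hp2 : p ≠ 2) (n : ℕ) :
    (multinomialUnit p n : (ι → ℕ) → ℤ_[p]) ∈ padicLipschitz p ι 0 := by
  have factor_mem (i : ι) : (fun v : ι → ℕ => (signedCoprimeFactorial p (v i) : ℤ_[p])) ∈
      padicLipschitz p ι 0 :=
    comp_eval_mem_padicLipschitz (u := fun n => (signedCoprimeFactorial p n : ℤ_[p]))
      (fun _ _ _ h => padicInt_pow_dvd_sub_intCast (signedCoprimeFactorial_modEq hp2 h)) i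
  have inverse_mem (i : ι) :
      (fun v : ι → ℕ => Ring.inverse (signedCoprimeFactorial p (v i) : ℤ_[p])) ∈
        padicLipschitz p ι 0 :=
    mem_padicLipschitz_of_mul_eq_one (factor_mem i)
      (funext fun _ => Ring.mul_inverse_cancel _ (isUnit_signedCoprimeFactorial _))
  convert (padicLipschitz p ι 0).smul_mem (prod_mem fun i (_ : i ∈ univ) => inverse_mem i)
    (signedCoprimeFactorial p n : ℤ_[p]) using 1
  ext v
  simp [multinomialUnit]

end MultinomialUnit

section CoprimeTuples

variable (p : ℕ) (ι : Type*) [Fintype ι] [DecidableEq ι]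

/-- The tuples of total `n` whose multinomial coefficient is not divisible by `p`. -/
def coprimeTuples (n : ℕ) : Finset (ι → ℕ) :=
  {v ∈ piAntidiag univ n | ¬ p ∣ Nat.multinomial univ v}

variable {p ι} {m r : ℕ}

theorem apply_lt_of_mem_piAntidiag {d : ι → ℕ} (hr : r < p) (hd : d ∈ piAntidiag univ r) (i : ι) :
    d i < p := by
  rw [mem_piAntidiag] at hd
  exact ((single_le_sum (fun _ _ => Nat.zero_le _) (mem_univ i)).trans hd.1.le).trans_lt hr

theorem smul_add_div_mod {x d : ι → ℕ} (hr : r < p) (hd : d ∈ piAntidiag univ r) :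
    ((p • x + d) · / p) = x ∧ ((p • x + d) · % p) = d := by
  have hlt := apply_lt_of_mem_piAntidiag hr hd
  constructor <;> ext i
  · simp [Nat.mul_add_div (hr.trans_le' r.zero_le), Nat.div_eq_of_lt (hlt i)]
  · simp [Nat.mod_eq_of_lt (hlt i)]

variable [Fact p.Prime]

theorem mem_coprimeTuples_mul_add (hr : r < p) {v : ι → ℕ} :
    v ∈ coprimeTuples p ι (p * m + r) ↔
      (v · / p) ∈ coprimeTuples p ι m ∧ (v · % p) ∈ piAntidiag univ r := by
  have hp : 0 < p := (Fact.out : p.Prime).pos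
  simp only [coprimeTuples, mem_filter, not_dvd_multinomial_iff (v := v), mem_piAntidiag,
    mem_univ, implies_true, and_true, sum_eq_mul_sum_div_add_sum_mod p v]
  constructor
  · rintro ⟨hsum, hlt, hdvd⟩
    have hdiv := congrArg (· / p) hsum
    simp only [Nat.mul_add_div hp, Nat.div_eq_of_lt hlt, Nat.div_eq_of_lt hr, add_zero] at hdiv
    exact ⟨⟨hdiv, hdvd⟩, by rwa [hdiv, Nat.add_left_cancel_iff] at hsum⟩
  · rintro ⟨⟨rfl, hdvd⟩, rfl⟩
    exact ⟨rfl, hr, hdvd⟩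

theorem sum_coprimeTuples_mul_add {M : Type*} [AddCommMonoid M] (hr : r < p)
    (F : (ι → ℕ) → M) :
    ∑ v ∈ coprimeTuples p ι (p * m + r), F v =
      ∑ x ∈ coprimeTuples p ι m, ∑ d ∈ piAntidiag univ r, F (p • x + d) := by
  have join_div_mod (v : ι → ℕ) : p • (v · / p) + (v · % p) = v :=
    funext fun i => Nat.div_add_mod (v i) p
  rw [← sum_product']
  refine sum_nbij' (fun v => ((v · / p), (v · % p))) (fun x => p • x.1 + x.2)
    (fun v hv => ?_) (fun x hx => ?_) (fun v _ => join_div_mod v) (fun x hx => ?_)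
    (fun v _ => by rw [join_div_mod])
  · exact mem_product.2 ((mem_coprimeTuples_mul_add hr).1 hv)
  · obtain ⟨hdiv, hmod⟩ := smul_add_div_mod (x := x.1) hr (mem_product.1 hx).2
    exact (mem_coprimeTuples_mul_add hr).2 (by rw [hdiv, hmod]; exact mem_product.1 hx)
  · obtain ⟨hdiv, hmod⟩ := smul_add_div_mod (x := x.1) hr (mem_product.1 hx).2
    exact Prod.ext hdiv hmod

end CoprimeTuples

section CoprimeMultinomialSum

variable (p : ℕ) [Fact p.Prime] (ι : Type*) [Fintype ι] [DecidableEq ι]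

/-- The sum of the `f v` over the tuples `v` of total `n`, weighted by those multinomial
coefficients `n! / ∏ i, (v i)!` that are not divisible by `p`, as a linear functional of `f`. -/
noncomputable def coprimeMultinomialSum (n : ℕ) : ((ι → ℕ) → ℤ_[p]) →ₗ[ℤ_[p]] ℤ_[p] :=
  ∑ v ∈ coprimeTuples p ι n, (Nat.multinomial univ v : ℤ_[p]) • LinearMap.proj v

variable {ι}

/-- The operator on weight functions by which `coprimeMultinomialSum` at `n = p * m + r` reduces
to `m`: it sums over the last base `p` digits `d` of the entries of the tuples. -/
noncomputable def digitTransfer (n r : ℕ) (f : (ι → ℕ) → ℤ_[p]) (x : ι → ℕ) : ℤ_[p] :=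
  ∑ d ∈ piAntidiag univ r, multinomialUnit p n (p • x + d) * f (p • x + d)

variable {p} {n m r : ℕ} {f g : (ι → ℕ) → ℤ_[p]}

theorem coprimeMultinomialSum_apply (n : ℕ) (f : (ι → ℕ) → ℤ_[p]) :
    coprimeMultinomialSum p ι n f = ∑ v ∈ coprimeTuples p ι n, Nat.multinomial univ v * f v := by
  simp [coprimeMultinomialSum]

theorem coprimeMultinomialSum_congr (h : ∀ v : ι → ℕ, ∑ i, v i = n → f v = g v) :
    coprimeMultinomialSum p ι n f = coprimeMultinomialSum p ι n g := by
  rw [coprimeMultinomialSum_apply, coprimeMultinomialSum_apply]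
  refine sum_congr rfl fun v hv => ?_
  rw [h v (mem_piAntidiag.1 (mem_filter.1 hv).1).1]

theorem coprimeMultinomialSum_mul_add (hr : r < p) (f : (ι → ℕ) → ℤ_[p]) :
    coprimeMultinomialSum p ι (p * m + r) f =
      coprimeMultinomialSum p ι m (digitTransfer p (p * m + r) r f) := by
  rw [coprimeMultinomialSum_apply, coprimeMultinomialSum_apply, sum_coprimeTuples_mul_add hr]
  refine sum_congr rfl fun x hx => ?_
  rw [digitTransfer, mul_sum]
  refine sum_congr rfl fun d hd => ?_
  obtain ⟨hdiv, hmod⟩ := smul_add_div_mod (x := x) hr hd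
  have hjoin : p • x + d ∈ coprimeTuples p ι (p * m + r) :=
    (mem_coprimeTuples_mul_add hr).2 (by rw [hdiv, hmod]; exact ⟨hx, hd⟩)
  have hmod_lt : ∑ i, (p • x + d) i % p < p := by
    rw [hmod, (mem_piAntidiag.1 hd).1]
    exact hr
  rw [multinomial_eq_multinomialUnit_mul hmod_lt, hdiv,
    (mem_piAntidiag.1 (mem_filter.1 hjoin).1).1]
  ring

end CoprimeMultinomialSum

section LowerBound

variable {p : ℕ} [Fact p.Prime] {ι : Type*} [Fintype ι] [DecidableEq ι] {n r : ℕ}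
  {f : (ι → ℕ) → ℤ_[p]}

theorem isSymmetricFun_digitTransfer (hf : IsSymmetricFun f) :
    IsSymmetricFun (digitTransfer p n r f) := by
  intro σ x
  rw [digitTransfer, ← sum_piAntidiag_comp_perm r σ]
  refine sum_congr rfl fun d _ => ?_
  have hcomp : p • (x ∘ σ) + d ∘ σ = (p • x + d) ∘ σ := rfl
  rw [hcomp, isSymmetricFun_multinomialUnit, hf]

theorem digitTransfer_mem_padicLipschitz (hp2 : p ≠ 2) (hf : f ∈ padicLipschitz p ι 0) :
    digitTransfer p n r f ∈ padicLipschitz p ι 1 := by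
  have hsum := sum_mem fun d (_ : d ∈ piAntidiag univ r) =>
    comp_smul_add_mem_padicLipschitz (mul_mem (multinomialUnit_mem_padicLipschitz hp2 n) hf) d
  convert hsum using 1
  ext x
  simp [digitTransfer]

theorem dvd_digitTransfer_zero (hcard : p ∣ Fintype.card ι) (hr0 : r ≠ 0) (hr : r < p)
    (hf : IsSymmetricFun f) : (p : ℤ_[p]) ∣ digitTransfer p n r f 0 := by
  have hsymm : IsSymmetricFun fun d => multinomialUnit p n d * f d := fun σ d => by
    simp only [isSymmetricFun_multinomialUnit n σ d, hf σ d]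
  have hdvd := (Nat.cast_dvd_cast (α := ℤ_[p]) hcard).trans (hsymm.card_dvd_mul_sum r)
  have hr_not_dvd : ¬ (p : ℤ_[p]) ∣ r :=
    padicInt_dvd_natCast_iff.not.2 (Nat.not_dvd_of_pos_of_lt (Nat.pos_of_ne_zero hr0) hr)
  simpa [digitTransfer] using (PadicInt.prime_p.dvd_or_dvd hdvd).resolve_left hr_not_dvd

theorem pow_nonzeroDigitCount_dvd_coprimeMultinomialSum (hp2 : p ≠ 2)
    (hcard : p ∣ Fintype.card ι) (hf : f ∈ padicLipschitz p ι 0) (hsymm : IsSymmetricFun f)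
    (n : ℕ) : (p : ℤ_[p]) ^ nonzeroDigitCount p n ∣ coprimeMultinomialSum p ι n f := by
  have hp : 1 < p := (Fact.out : p.Prime).one_lt
  induction n using digit_induction hp generalizing f with
  | zero => simp [nonzeroDigitCount]
  | step m r hr _ ih =>
    have hmem := digitTransfer_mem_padicLipschitz (n := p * m + r) (r := r) hp2 hf
    rw [coprimeMultinomialSum_mul_add hr, nonzeroDigitCount_mul_add hp m hr]
    split_ifs with hr0
    · exact ih (padicLipschitz_antitone zero_le_one hmem) (isSymmetricFun_digitTransfer hsymm)
    · obtain ⟨g, hg, hfg⟩ :=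
        exists_eq_smul_of_mem_padicLipschitz hmem (dvd_digitTransfer_zero hcard hr0 hr hsymm)
      have hg_symm : IsSymmetricFun g :=
        .of_smul PadicInt.prime_p.ne_zero (hfg ▸ (isSymmetricFun_digitTransfer hsymm))
      rw [hfg, map_smul, smul_eq_mul, pow_succ']
      exact mul_dvd_mul_left _ (ih hg hg_symm)

theorem pow_succ_dvd_coprimeMultinomialSum_iff (hp2 : p ≠ 2) (hcard : p ∣ Fintype.card ι)
    (hf : f ∈ padicLipschitz p ι 1) (hsymm : IsSymmetricFun f) (n : ℕ) :
    (p : ℤ_[p]) ^ (nonzeroDigitCount p n + 1) ∣ coprimeMultinomialSum p ι n f ↔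
      (p : ℤ_[p]) ∣ f 0 ∨
        (p : ℤ_[p]) ^ (nonzeroDigitCount p n + 1) ∣ coprimeMultinomialSum p ι n 1 := by
  have hmem : f - f 0 • 1 ∈ padicLipschitz p ι 1 := sub_mem hf (Subalgebra.smul_mem _ (one_mem _) _)
  obtain ⟨g, hg, hfg⟩ := exists_eq_smul_of_mem_padicLipschitz hmem (by simp)
  have hg_symm : IsSymmetricFun g := by
    refine .of_smul PadicInt.prime_p.ne_zero (hfg ▸ fun σ x => ?_)
    simp [hsymm σ x]
  have reduce : (p : ℤ_[p]) ^ (nonzeroDigitCount p n + 1) ∣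
      coprimeMultinomialSum p ι n f - f 0 * coprimeMultinomialSum p ι n 1 := by
    rw [← smul_eq_mul (f 0), ← map_smul, ← map_sub, hfg, map_smul, smul_eq_mul, pow_succ']
    exact mul_dvd_mul_left _
      (pow_nonzeroDigitCount_dvd_coprimeMultinomialSum hp2 hcard hg hg_symm n)
  obtain ⟨c, hc⟩ := pow_nonzeroDigitCount_dvd_coprimeMultinomialSum hp2 hcard
    (one_mem (padicLipschitz p ι 0)) (fun _ _ => rfl) n
  have hpow : (p : ℤ_[p]) ^ nonzeroDigitCount p n ≠ 0 := pow_ne_zero _ PadicInt.prime_p.ne_zero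
  rw [(dvd_iff_dvd_of_dvd_sub reduce), hc, mul_left_comm, pow_succ, mul_dvd_mul_iff_left hpow,
    mul_dvd_mul_iff_left hpow, PadicInt.prime_p.dvd_mul]

end LowerBound

section BinomialHarmonic

variable {R : Type*} [CommRing R]

/-- Expand `(X + 1 + ⋯ + 1) ^ n` by the multinomial and by the binomial theorem, and apply the
linear map `X ^ k ↦ g k`. -/
theorem sum_multinomial_mul_apply {ι : Type*} [Fintype ι] [DecidableEq ι] (g : ℕ → R) (n : ℕ)
    (i : ι) : ∑ d ∈ piAntidiag univ n, (Nat.multinomial univ d : R) * g (d i) =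
      ∑ k ∈ range (n + 1), (Fintype.card ι - 1 : R) ^ (n - k) * n.choose k * g k := by
  let φ : Polynomial R →ₗ[R] R := Polynomial.lsum fun k => LinearMap.toSpanSingleton R R (g k)
  have φ_X_pow (c : R) (k : ℕ) : φ (Polynomial.C c * Polynomial.X ^ k) = c * g k := by
    rw [Polynomial.C_mul_X_pow_eq_monomial]
    simp [φ]
  have expand : (Polynomial.X + Polynomial.C (Fintype.card ι - 1 : R)) ^ n =
      ∑ d ∈ piAntidiag univ n,
        Polynomial.C (Nat.multinomial univ d : R) * Polynomial.X ^ d i := by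
    have key := sum_pow_eq_sum_piAntidiag univ
      (fun j => if j = i then (Polynomial.X : Polynomial R) else 1) n
    simp only [ite_pow, one_pow, prod_ite_eq', mem_univ, if_true] at key
    convert key using 2
    · rw [← add_sum_erase _ _ (mem_univ i), if_pos rfl,
        sum_congr rfl fun j hj => if_neg (ne_of_mem_erase hj)]
      simp [card_erase_of_mem, Nat.cast_pred (Fintype.card_pos_iff.2 ⟨i⟩)]
    · simp
  have hφ := congrArg φ (expand.symm.trans (add_pow _ _ _))
  simp only [map_sum, φ_X_pow] at hφ
  rw [hφ]
  refine sum_congr rfl fun k _ => ?_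
  rw [← φ_X_pow, Polynomial.C_mul, Polynomial.C_pow, Polynomial.C_eq_natCast]
  congr 1
  ring

theorem succ_mul_fwdDiff_iter_harmonic {h : ℕ → R} {s : ℕ}
    (hh : ∀ j ≤ s, (j + 1) * (h (j + 1) - h j) = 1) :
    (s + 1) * (fwdDiff 1)^[s + 1] h 0 = (-1) ^ s := by
  have absorb (k : ℕ) (hk : k ∈ range (s + 1)) :
      (s + 1 : R) * ((-1) ^ (s - k) * s.choose k * (h (k + 1) - h k)) =
        (-1) ^ (s - k) * (s + 1).choose (k + 1) := by
    have choose_succ : (s + 1 : R) * s.choose k = (s + 1).choose (k + 1) * (k + 1) := by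
      exact_mod_cast congrArg (Nat.cast (R := R)) (Nat.add_one_mul_choose_eq s k)
    linear_combination (-1) ^ (s - k) * (h (k + 1) - h k) * choose_succ +
      (-1) ^ (s - k) * (s + 1).choose (k + 1) * hh k (mem_range_succ_iff.1 hk)
  have alternating : ∑ k ∈ range (s + 1), (-1 : R) ^ (s - k) * (s + 1).choose (k + 1) =
      (-1) ^ s := by
    have := add_pow (1 : R) (-1) (s + 1)
    simp only [sum_range_succ' _ (s + 1), add_neg_cancel, one_pow, one_mul, Nat.add_sub_add_right,
      zero_pow s.succ_ne_zero, Nat.choose_zero_right, Nat.cast_one, mul_one, Nat.sub_zero] at this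
    linear_combination -this + pow_succ (-1 : R) s
  rw [Function.iterate_succ_apply, fwdDiff_iter_eq_sum_shift, mul_sum, ← alternating]
  refine sum_congr rfl fun k hk => ?_
  rw [← absorb k hk]
  simp [fwdDiff]

end BinomialHarmonic

section SecondOrder

theorem sq_dvd_prod_one_add_sub {R α : Type*} [CommRing R] (p : R) (s : Finset α) (a : α → R) :
    p ^ 2 ∣ ∏ i ∈ s, (1 + p * a i) - (1 + p * ∑ i ∈ s, a i) := by
  induction s using Finset.cons_induction with
  | empty => simp
  | cons i s hi ih =>
    obtain ⟨c, hc⟩ := ih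
    refine ⟨c * (1 + p * a i) + a i * ∑ j ∈ s, a j, ?_⟩
    rw [prod_cons, sum_cons]
    linear_combination (1 + p * a i) * hc

theorem sq_dvd_sub_mul_one_sub {R : Type*} [CommRing R] {p u v P S : R} (huv : u * P = v)
    (hP : p ^ 2 ∣ P - (1 + p * S)) : p ^ 2 ∣ u - v * (1 - p * S) := by
  obtain ⟨c, hc⟩ := hP
  refine ⟨u * (S ^ 2 - c * (1 - p * S)), ?_⟩
  linear_combination (1 - p * S) * huv - u * (1 - p * S) * hc

variable (p : ℕ) [Fact p.Prime]

/-- The harmonic number `1 + 1 / 2 + ⋯ + 1 / d`, for `d < p`, as a `p`-adic integer; the junk value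
of `Ring.inverse` omits the terms whose denominator is divisible by `p`. -/
noncomputable def padicHarmonic (d : ℕ) : ℤ_[p] :=
  ∑ j ∈ range d, Ring.inverse ((j + 1 : ℕ) : ℤ_[p])

variable {p}

theorem isUnit_padicInt_natCast {n : ℕ} (hn : ¬ p ∣ n) : IsUnit (n : ℤ_[p]) :=
  PadicInt.isUnit_iff.2 <| PadicInt.norm_natCast_eq_one_iff.2 <|
    (Fact.out : p.Prime).coprime_iff_not_dvd.2 hn

theorem succ_mul_inverse_of_lt {j : ℕ} (hj : j + 1 < p) :
    ((j + 1 : ℕ) : ℤ_[p]) * Ring.inverse ((j + 1 : ℕ) : ℤ_[p]) = 1 :=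
  Ring.mul_inverse_cancel _ (isUnit_padicInt_natCast (Nat.not_dvd_of_pos_of_lt j.succ_pos hj))

theorem signedCoprimeFactorial_mul_add (x : ℕ) {d : ℕ} (hd : d < p) :
    (signedCoprimeFactorial p (p * x + d) : ℤ_[p]) = signedCoprimeFactorial p (p * x) *
      ((-1) ^ d * d.factorial *
        ∏ j ∈ range d, (1 + p * (x * Ring.inverse ((j + 1 : ℕ) : ℤ_[p])))) := by
  induction d with
  | zero => simp
  | succ d ih =>
    have hdvd : ¬ p ∣ p * x + d + 1 := by
      rw [add_assoc, ← Nat.dvd_add_iff_right (dvd_mul_right p x)]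
      exact Nat.not_dvd_of_pos_of_lt d.succ_pos hd
    rw [← add_assoc, signedCoprimeFactorial_succ, if_neg hdvd, Int.cast_mul, ih (by omega),
      prod_range_succ, Nat.factorial_succ]
    have hinv := succ_mul_inverse_of_lt hd
    generalize Ring.inverse ((d + 1 : ℕ) : ℤ_[p]) = y at hinv
    push_cast at hinv ⊢
    linear_combination (p * x * (signedCoprimeFactorial p (p * x) * ((-1) ^ d * d.factorial *
        ∏ j ∈ range d, (1 + p * (x * Ring.inverse (j + 1 : ℤ_[p])))))) * hinv

variable {ι : Type*} [Fintype ι]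

theorem multinomialUnit_smul_add (n : ℕ) (x : ι → ℕ) {d : ι → ℕ} (hd : ∀ i, d i < p) :
    multinomialUnit p n (p • x + d) * ((-1) ^ (∑ i, d i) * ∏ i, (d i).factorial) *
        ∏ i, ∏ j ∈ range (d i), (1 + p * (x i * Ring.inverse ((j + 1 : ℕ) : ℤ_[p]))) =
      multinomialUnit p n (p • x) := by
  have factor (i : ι) : Ring.inverse (signedCoprimeFactorial p (p * x i + d i) : ℤ_[p]) *
      ((-1) ^ d i * (d i).factorial *
        ∏ j ∈ range (d i), (1 + p * (x i * Ring.inverse ((j + 1 : ℕ) : ℤ_[p])))) =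
      Ring.inverse (signedCoprimeFactorial p (p * x i) : ℤ_[p]) := by
    rw [Ring.inverse_mul_eq_iff_eq_mul _ _ _ (isUnit_signedCoprimeFactorial _),
      Ring.eq_mul_inverse_iff_mul_eq _ _ _ (isUnit_signedCoprimeFactorial _), mul_comm,
      signedCoprimeFactorial_mul_add _ (hd i)]
  have prod_factor := prod_congr (rfl : (univ : Finset ι) = univ) fun i _ => factor i
  simp only [prod_mul_distrib, prod_pow_eq_pow_sum] at prod_factor
  simp only [multinomialUnit, Pi.add_apply, Pi.smul_apply, smul_eq_mul, Nat.cast_prod]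
  linear_combination (signedCoprimeFactorial p n : ℤ_[p]) * prod_factor

theorem exists_multinomialUnit_smul_add_eq (hp2 : p ≠ 2) (n : ℕ) {d : ι → ℕ}
    (hd : ∀ i, d i < p) : ∃ e ∈ padicLipschitz p ι 0, ∀ x,
      multinomialUnit p n (p • x + d) * ((-1) ^ (∑ i, d i) * ∏ i, (d i).factorial) =
        multinomialUnit p n (p • x) * (1 - p * ∑ i, x i * padicHarmonic p (d i)) +
          p ^ 2 * e x := by
  have shifted_mem (d : ι → ℕ) :
      (fun x => multinomialUnit p n (p • x + d)) ∈ padicLipschitz p ι 0 :=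
    padicLipschitz_antitone zero_le_one
      (comp_smul_add_mem_padicLipschitz (multinomialUnit_mem_padicLipschitz hp2 n) d)
  let u : padicLipschitz p ι 0 :=
    ((-1) ^ (∑ i, d i) * ∏ i, ((d i).factorial : ℤ_[p])) • ⟨_, shifted_mem d⟩
  let v : padicLipschitz p ι 0 := ⟨_, shifted_mem 0⟩
  let y (a : Σ _ : ι, ℕ) : padicLipschitz p ι 0 :=
    Ring.inverse ((a.2 + 1 : ℕ) : ℤ_[p]) • ⟨_, eval_mem_padicLipschitz a.1⟩
  let s : Finset (Σ _ : ι, ℕ) := univ.sigma fun i => range (d i)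
  have factor : u * ∏ a ∈ s, (1 + (p : padicLipschitz p ι 0) * y a) = v := by
    ext x
    simpa [u, v, y, s, prod_sigma, mul_assoc, mul_comm, mul_left_comm] using
      multinomialUnit_smul_add n x hd
  obtain ⟨e, he⟩ := sq_dvd_sub_mul_one_sub factor (sq_dvd_prod_one_add_sub _ s y)
  refine ⟨e, e.2, fun x => ?_⟩
  have hx := congrFun (congrArg Subtype.val he) x
  rw [← sub_eq_iff_eq_add']
  simpa [u, v, y, s, sum_sigma, padicHarmonic, mul_sum, mul_assoc, mul_comm,
    mul_left_comm] using hx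

end SecondOrder

section LastDigit

variable {p : ℕ} [Fact p.Prime] {ι : Type*} [Fintype ι] [DecidableEq ι] {r : ℕ}

variable (p) in
/-- The total of the harmonic numbers `padicHarmonic p (d i)` over the tuples `d` of length `p` and
total `r`, weighted by multinomial coefficients; it does not depend on the index `i`. -/
noncomputable def multinomialHarmonicSum (r : ℕ) : ℤ_[p] :=
  ∑ k ∈ range (r + 1), (p - 1 : ℤ_[p]) ^ (r - k) * r.choose k * padicHarmonic p k

theorem sum_multinomial_mul_sum_padicHarmonic (hcard : Fintype.card ι = p) (r : ℕ) (x : ι → ℕ) :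
    ∑ d ∈ piAntidiag univ r,
        (Nat.multinomial univ d : ℤ_[p]) * ∑ i, x i * padicHarmonic p (d i) =
      multinomialHarmonicSum p r * ∑ i, (x i : ℤ_[p]) := by
  simp only [mul_sum, mul_left_comm _ (x _ : ℤ_[p])]
  rw [sum_comm]
  refine sum_congr rfl fun i _ => ?_
  rw [← mul_sum, sum_multinomial_mul_apply, hcard, multinomialHarmonicSum, mul_comm]

theorem exists_factorial_mul_digitTransfer_one_eq (hp2 : p ≠ 2) (hcard : Fintype.card ι = p)
    (hr : r < p) (n : ℕ) : ∃ e ∈ padicLipschitz p ι 0, ∀ x,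
      (-1) ^ r * r.factorial * digitTransfer p n r 1 x =
        multinomialUnit p n (p • x) *
          (p ^ r - p * (multinomialHarmonicSum p r * ∑ i, (x i : ℤ_[p]))) + p ^ 2 * e x := by
  choose! e he hexpand using fun (d : ι → ℕ) (hd : d ∈ piAntidiag univ r) =>
    exists_multinomialUnit_smul_add_eq hp2 n (apply_lt_of_mem_piAntidiag hr hd)
  refine ⟨∑ d ∈ piAntidiag univ r, (Nat.multinomial univ d : ℤ_[p]) • e d,
    sum_mem fun d hd => Subalgebra.smul_mem _ (he d hd) _, fun x => ?_⟩
  have sum_multinomial : (p : ℤ_[p]) ^ r =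
      ∑ d ∈ piAntidiag (univ : Finset ι) r, (Nat.multinomial univ d : ℤ_[p]) := by
    simpa [hcard] using sum_pow_eq_sum_piAntidiag (univ : Finset ι) (fun _ => (1 : ℤ_[p])) r
  have term {d : ι → ℕ} (hd : d ∈ piAntidiag univ r) :
      (-1) ^ r * r.factorial * multinomialUnit p n (p • x + d) =
        Nat.multinomial univ d * (multinomialUnit p n (p • x) *
          (1 - p * ∑ i, x i * padicHarmonic p (d i)) + p ^ 2 * e d x) := by
    have hspec := congrArg (Nat.cast (R := ℤ_[p])) (Nat.multinomial_spec univ d)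
    rw [(mem_piAntidiag.1 hd).1, Nat.cast_mul] at hspec
    rw [← hexpand d hd, (mem_piAntidiag.1 hd).1, ← hspec]
    ring
  rw [← sum_multinomial_mul_sum_padicHarmonic hcard, sum_multinomial, digitTransfer]
  simp only [Pi.one_apply, mul_one, Finset.sum_apply, Pi.smul_apply, smul_eq_mul,
    mul_sum (s := piAntidiag univ r), ← sum_sub_distrib, ← sum_add_distrib]
  refine sum_congr rfl fun d hd => ?_
  rw [term hd]
  ring

theorem exists_digitTransfer_one_eq_mul (hp2 : p ≠ 2) (hcard : Fintype.card ι = p)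
    (hr0 : r ≠ 0) (hr : r < p) (n m : ℕ) :
    ∃ g ∈ padicLipschitz p ι 1, IsSymmetricFun g ∧
      ((p : ℤ_[p]) ∣ g 0 ↔ (p : ℤ_[p]) ∣ p ^ (r - 1) - multinomialHarmonicSum p r * m) ∧
      ∀ x, ∑ i, x i = m → (-1) ^ r * r.factorial * digitTransfer p n r 1 x = p * g x := by
  obtain ⟨e, he, hexpand⟩ := exists_factorial_mul_digitTransfer_one_eq (ι := ι) hp2 hcard hr n
  have unit_symm (σ : Equiv.Perm ι) (x : ι → ℕ) :
      multinomialUnit p n (p • (x ∘ σ)) = multinomialUnit p n (p • x) :=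
    isSymmetricFun_multinomialUnit n σ (p • x)
  have e_symm : IsSymmetricFun e := fun σ x => by
    have hσ := hexpand (x ∘ σ)
    have sum_symm : ∑ i, ((x ∘ σ) i : ℤ_[p]) = ∑ i, (x i : ℤ_[p]) :=
      Equiv.sum_comp σ fun i => (x i : ℤ_[p])
    rw [isSymmetricFun_digitTransfer (fun _ _ => rfl), hexpand x, unit_symm σ x, sum_symm] at hσ
    exact mul_left_cancel₀ (pow_ne_zero 2 PadicInt.prime_p.ne_zero) (add_left_cancel hσ).symm
  have unit_mem : (fun x : ι → ℕ => multinomialUnit p n (p • x)) ∈ padicLipschitz p ι 1 := by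
    simpa only [add_zero] using
      comp_smul_add_mem_padicLipschitz (multinomialUnit_mem_padicLipschitz (ι := ι) hp2 n) 0
  let c : ℤ_[p] := p ^ (r - 1) - multinomialHarmonicSum p r * m
  refine ⟨c • (fun x => multinomialUnit p n (p • x)) + (p : ℤ_[p]) • e,
    add_mem (Subalgebra.smul_mem _ unit_mem c) (smul_mem_padicLipschitz_succ_iff.2 he),
    fun σ x => ?_, ?_, fun x hx => ?_⟩
  · simp only [Pi.add_apply, Pi.smul_apply, unit_symm σ x, e_symm σ x]
  · simp [dvd_add_left, (isUnit_multinomialUnit _ _).dvd_mul_right, c]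
  · have hpow : (p : ℤ_[p]) ^ r = p * p ^ (r - 1) := (mul_pow_sub_one hr0 _).symm
    rw [hexpand, hpow, ← Nat.cast_sum, hx]
    simp only [Pi.add_apply, Pi.smul_apply, smul_eq_mul, c]
    ring

theorem dvd_succ_mul_multinomialHarmonicSum_sub {s : ℕ} (hs : s + 1 < p) :
    (p : ℤ_[p]) ∣ (s + 1) * multinomialHarmonicSum p (s + 1) - (-1) ^ s := by
  have alternating : (s + 1) * ∑ k ∈ range (s + 1 + 1),
      (-1 : ℤ_[p]) ^ (s + 1 - k) * (s + 1).choose k * padicHarmonic p k = (-1) ^ s := by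
    rw [← succ_mul_fwdDiff_iter_harmonic (h := padicHarmonic p) fun j hj => ?_,
      fwdDiff_iter_eq_sum_shift]
    · simp
    · rw [padicHarmonic, padicHarmonic, sum_range_succ, add_sub_cancel_left]
      exact_mod_cast succ_mul_inverse_of_lt (by omega)
  rw [← alternating, ← mul_sub, multinomialHarmonicSum, ← sum_sub_distrib]
  refine (dvd_sum fun k _ => ?_).mul_left _
  rw [← sub_mul, ← sub_mul]
  refine Dvd.dvd.mul_right (Dvd.dvd.mul_right ?_ _) _
  simpa using sub_dvd_pow_sub_pow (p - 1 : ℤ_[p]) (-1) (s + 1 - k)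

theorem dvd_pow_sub_multinomialHarmonicSum_mul_iff (hr0 : r ≠ 0) (hr : r < p) (m : ℕ) :
    (p : ℤ_[p]) ∣ p ^ (r - 1) - multinomialHarmonicSum p r * m ↔
      m % p = if r = 1 then 1 else 0 := by
  obtain ⟨s, rfl⟩ := Nat.exists_eq_add_one_of_ne_zero hr0
  rcases eq_or_ne s 0 with rfl | hs
  · have harmonic_one : multinomialHarmonicSum p 1 = 1 := by
      simp [multinomialHarmonicSum, padicHarmonic, sum_range_succ]
    have modEq_iff : (p : ℤ_[p]) ∣ 1 - m ↔ m ≡ 1 [MOD p] := by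
      rw [Nat.modEq_iff_dvd, ← PadicInt.norm_int_lt_one_iff_dvd, PadicInt.norm_lt_one_iff_dvd]
      simp
    simp [harmonic_one, modEq_iff, Nat.ModEq, Nat.mod_eq_of_lt hr]
  · have not_dvd : ¬ (p : ℤ_[p]) ∣ multinomialHarmonicSum p (s + 1) := fun h => by
      have := (dvd_sub_right (h.mul_left (s + 1 : ℤ_[p]))).1
        (dvd_succ_mul_multinomialHarmonicSum_sub hr)
      exact PadicInt.prime_p.not_isUnit (isUnit_of_dvd_unit this (isUnit_one.neg.pow s))
    rw [Nat.add_sub_cancel, dvd_sub_right (dvd_pow_self _ hs), PadicInt.prime_p.dvd_mul,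
      or_iff_right not_dvd, padicInt_dvd_natCast_iff, if_neg (by simpa using hs),
      Nat.dvd_iff_mod_eq_zero]

end LastDigit

section Equality

variable {p : ℕ} [Fact p.Prime] {ι : Type*} [Fintype ι] [DecidableEq ι]

theorem pow_succ_dvd_coprimeMultinomialSum_one_mul_add_iff (hp2 : p ≠ 2)
    (hcard : Fintype.card ι = p) (m : ℕ) {r : ℕ} (hr : r < p) :
    (p : ℤ_[p]) ^ (nonzeroDigitCount p (p * m + r) + 1) ∣
        coprimeMultinomialSum p ι (p * m + r) 1 ↔
      (r ≠ 0 ∧ m % p = if r = 1 then 1 else 0) ∨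
        (p : ℤ_[p]) ^ (nonzeroDigitCount p m + 1) ∣ coprimeMultinomialSum p ι m 1 := by
  have hcard_dvd : p ∣ Fintype.card ι := hcard ▸ dvd_rfl
  have one_symm : IsSymmetricFun (1 : (ι → ℕ) → ℤ_[p]) := fun _ _ => rfl
  have one_mem : (1 : (ι → ℕ) → ℤ_[p]) ∈ padicLipschitz p ι 0 := one_mem _
  rw [coprimeMultinomialSum_mul_add hr, nonzeroDigitCount_mul_add (Fact.out : p.Prime).one_lt m hr]
  rcases eq_or_ne r 0 with rfl | hr0
  · have not_dvd : ¬ (p : ℤ_[p]) ∣ digitTransfer p (p * m + 0) 0 (1 : (ι → ℕ) → ℤ_[p]) 0 := by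
      have unit : IsUnit (digitTransfer p (p * m + 0) 0 (1 : (ι → ℕ) → ℤ_[p]) 0) := by
        simpa [digitTransfer] using isUnit_multinomialUnit _ _
      exact fun hdvd => PadicInt.prime_p.not_isUnit (isUnit_of_dvd_unit hdvd unit)
    rw [if_pos rfl, add_zero, pow_succ_dvd_coprimeMultinomialSum_iff hp2 hcard_dvd
      (digitTransfer_mem_padicLipschitz hp2 one_mem) (isSymmetricFun_digitTransfer one_symm),
      or_iff_right not_dvd]
    simp
  · obtain ⟨g, hg, hg_symm, hg0, hgx⟩ :=
      exists_digitTransfer_one_eq_mul hp2 hcard hr0 hr (p * m + r) m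
    let c : ℤ_[p] := (-1) ^ r * r.factorial
    have c_unit : IsUnit c := (isUnit_one.neg.pow r).mul (isUnit_padicInt_natCast fun h =>
      hr.not_ge ((Fact.out : p.Prime).dvd_factorial.1 h))
    have scaled : c * coprimeMultinomialSum p ι m (digitTransfer p (p * m + r) r 1) =
        p * coprimeMultinomialSum p ι m g := by
      rw [← smul_eq_mul c, ← smul_eq_mul (p : ℤ_[p]), ← map_smul, ← map_smul]
      exact coprimeMultinomialSum_congr hgx
    rw [← c_unit.dvd_mul_left, scaled, if_neg hr0, pow_succ',
      mul_dvd_mul_iff_left PadicInt.prime_p.ne_zero,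
      pow_succ_dvd_coprimeMultinomialSum_iff hp2 hcard_dvd hg hg_symm, hg0,
      dvd_pow_sub_multinomialHarmonicSum_mul_iff hr0 hr]
    simp [hr0]

/-- The condition that equality in the lower bound imposes on a digit `a` and on the next more
significant digit `b`. -/
def IsExtremalDigitPair (a b : ℕ) : Prop := ¬ (b = 1 ∧ a = 1) ∧ ¬ (b = 0 ∧ 2 ≤ a)

theorem isExtremalDigitPair_iff {a b : ℕ} :
    IsExtremalDigitPair a b ↔ ¬ (a ≠ 0 ∧ b = if a = 1 then 1 else 0) := by
  unfold IsExtremalDigitPair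
  split_ifs <;> omega

theorem not_pow_succ_dvd_coprimeMultinomialSum_one_iff (hp2 : p ≠ 2) (hcard : Fintype.card ι = p)
    (n : ℕ) : ¬ (p : ℤ_[p]) ^ (nonzeroDigitCount p n + 1) ∣ coprimeMultinomialSum p ι n 1 ↔
      n = 0 ∨ (p.digits n).getLast? = some 1 ∧ (p.digits n).IsChain IsExtremalDigitPair := by
  have hp : 1 < p := (Fact.out : p.Prime).one_lt
  induction n using digit_induction hp with
  | zero =>
    have sum_zero : coprimeMultinomialSum p ι 0 1 = 1 := by
      have tuples : coprimeTuples p ι 0 = {0} := by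
        simp [coprimeTuples, filter_singleton, Nat.multinomial, hp.ne']
      simp [coprimeMultinomialSum_apply, tuples, Nat.multinomial]
    simpa [sum_zero, nonzeroDigitCount] using PadicInt.prime_p.not_dvd_one
  | step m r hr hpos ih =>
    have hrm : r ≠ 0 ∨ m ≠ 0 := by
      by_contra! h
      simp [h] at hpos
    rw [pow_succ_dvd_coprimeMultinomialSum_one_mul_add_iff hp2 hcard m hr, not_or,
      and_congr_right' ih, ← isExtremalDigitPair_iff, or_iff_right hpos.ne', add_comm (p * m) r,
      Nat.digits_add p hp r m hr hrm]
    rcases m.eq_zero_or_pos with rfl | hm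
    · simp only [isExtremalDigitPair_iff, Nat.zero_mod, Nat.digits_zero, List.getLast?_singleton,
        List.IsChain.singleton, Option.some.injEq, true_or, and_true]
      have hr0 : r ≠ 0 := by simpa using hrm
      split_ifs with hr1 <;> simp [hr0, hr1]
    · rw [Nat.digits_def' hp hm, List.getLast?_cons_cons, List.isChain_cons_cons]
      simp only [hm.ne', false_or]
      tauto

theorem natCast_sum_coprimeTuples (n : ℕ) :
    ((∑ v ∈ coprimeTuples p ι n, Nat.multinomial univ v : ℕ) : ℤ_[p]) =
      coprimeMultinomialSum p ι n 1 := by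
  simp [coprimeMultinomialSum_apply]

theorem sum_coprimeTuples_ne_zero [Nonempty ι] (n : ℕ) :
    ∑ v ∈ coprimeTuples p ι n, Nat.multinomial univ v ≠ 0 := by
  obtain ⟨i⟩ := ‹Nonempty ι›
  have single_mem : Pi.single i n ∈ coprimeTuples p ι n := by
    simp [coprimeTuples, Nat.multinomial_single, (Fact.out : p.Prime).ne_one]
  exact (sum_pos (fun v _ => Nat.multinomial_pos _ _) ⟨_, single_mem⟩).ne'

theorem pow_dvd_coprimeMultinomialSum_one_iff [Nonempty ι] (k n : ℕ) :
    (p : ℤ_[p]) ^ k ∣ coprimeMultinomialSum p ι n 1 ↔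
      k ≤ padicValNat p (∑ v ∈ coprimeTuples p ι n, Nat.multinomial univ v) := by
  rw [← padicValNat_dvd_iff_le (sum_coprimeTuples_ne_zero n), ← natCast_sum_coprimeTuples]
  exact_mod_cast PadicInt.pow_p_dvd_int_iff k ((∑ v ∈ coprimeTuples p ι n, _ : ℕ) : ℤ)

end Equality

theorem stmt_15_general {p : ℕ} [Fact p.Prime] (hp2 : p ≠ 2) {ι : Type*} [Fintype ι]
    [DecidableEq ι] (hcard : Fintype.card ι = p) {n : ℕ} (hn : 0 < n) {S : ℕ}
    (hS : S = ∑ v ∈ piAntidiag (univ : Finset ι) n with ¬ p ∣ Nat.multinomial univ v,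
      Nat.multinomial univ v) :
    nonzeroDigitCount p n ≤ padicValNat p S ∧
      (padicValNat p S = nonzeroDigitCount p n ↔
        (p.digits n).getLast? = some 1 ∧ (p.digits n).IsChain IsExtremalDigitPair) := by
  have : Nonempty ι := Fintype.card_pos_iff.1 (hcard ▸ (Fact.out : p.Prime).pos)
  obtain rfl : S = ∑ v ∈ coprimeTuples p ι n, Nat.multinomial univ v := hS
  have lower := pow_nonzeroDigitCount_dvd_coprimeMultinomialSum (ι := ι) hp2
    (hcard ▸ dvd_rfl) (one_mem _) (fun _ _ => rfl) n
  have equality := not_pow_succ_dvd_coprimeMultinomialSum_one_iff hp2 hcard n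
  rw [pow_dvd_coprimeMultinomialSum_one_iff] at lower equality
  rw [or_iff_right hn.ne'] at equality
  rw [← equality]
  omega

theorem stmt_15 (n : ℕ) (hn : 0 < n)
    (S : ℕ)
    (hS : S = ∑ x ∈ (Finset.Nat.antidiagonalTuple 3 n).filter
        (fun x => ¬ (3 ∣ Nat.multinomial Finset.univ x)),
      Nat.multinomial Finset.univ x) :
    s3star n ≤ padicValNat 3 S ∧
      (padicValNat 3 S = s3star n ↔
        ((Nat.digits 3 n).getLast? = some 1 ∧
          ∀ i : ℕ, i + 1 < (Nat.digits 3 n).length →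
            ¬((Nat.digits 3 n).getD (i + 1) 0 = 1 ∧ (Nat.digits 3 n).getD i 0 = 1) ∧
            ¬((Nat.digits 3 n).getD (i + 1) 0 = 0 ∧ (Nat.digits 3 n).getD i 0 = 2))) := by
  have s3star_eq : s3star n = nonzeroDigitCount 3 n := rfl
  rw [← piAntidiag_univ_fin_eq_antidiagonalTuple] at hS
  have key := stmt_15_general (p := 3) (by norm_num) (Fintype.card_fin 3) hn hS
  rw [List.isChain_iff_getElem, ← s3star_eq] at key
  refine ⟨key.1, key.2.trans <| and_congr_right fun _ => forall₂_congr fun i hi => ?_⟩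
  have ternary : (Nat.digits 3 n)[i] < 3 := Nat.digits_lt_base (by norm_num) (List.getElem_mem _)
  rw [List.getD_eq_getElem _ _ hi, List.getD_eq_getElem _ _ (Nat.lt_of_succ_lt hi),
    IsExtremalDigitPair]
  omega
end

section
/- Let a, b, and n be positive integers and let d = a·b. Then W_d(n) = ∑_{x₁+x₂+⋯+x_b=n, xᵢ ≥ 0} ((2n)!/((2x₁)!·(2x₂)!⋯(2x_b)!)) · W_a(x₁)·W_a(x₂)⋯W_a(x_b). -/
/-- `Wstar d n` is the number of Abelian squares: the sum over all tuples
`(x₁,…,x_d)` of nonnegative integers summing to `n` of the square of the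
multinomial coefficient `n!/(x₁!⋯x_d!)`. -/
def Wstar (d n : ℕ) : ℕ :=
  ∑ x ∈ Finset.Nat.antidiagonalTuple d n, (Nat.multinomial Finset.univ x) ^ 2

/-- `W d n` is the number of `2n`-step closed walks at the origin in `ℤ^d`. -/
def W (d n : ℕ) : ℕ := Nat.choose (2 * n) n * Wstar d n

/-!
The power series `B = ∑ₖ Xᵏ / k!²` satisfies `n!² · [Xⁿ] Bᵈ = Wstar d n`, because a squared
multinomial coefficient is `n!²` times a product of coefficients of `B`. Hence
`[Xⁿ] Bᵈ = W d n / (2n)!`, and splitting `d` into blocks amounts to factoring `Bᵈ` into powers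
of `B` and multiplying out.
-/

open Finset PowerSeries
open scoped Nat

theorem coeff_prod_eq_sum_piAntidiag {ι R : Type*} [DecidableEq ι] [CommSemiring R]
    (s : Finset ι) (F : ι → R⟦X⟧) (n : ℕ) :
    coeff n (∏ i ∈ s, F i) = ∑ x ∈ piAntidiag s n, ∏ i ∈ s, coeff (x i) (F i) := by
  rw [coeff_prod, finsuppAntidiag, sum_map]
  exact sum_attach _ fun x : ι → ℕ => ∏ i ∈ s, coeff (x i) (F i)

theorem cast_multinomial_eq_div {ι K : Type*} [Semifield K] [CharZero K]
    (s : Finset ι) (x : ι → ℕ) :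
    (Nat.multinomial s x : K) = (∑ i ∈ s, x i)! / ∏ i ∈ s, ((x i)! : K) := by
  have prod_ne_zero : ∏ i ∈ s, ((x i)! : K) ≠ 0 :=
    prod_ne_zero_iff.2 fun i _ => Nat.cast_ne_zero.2 (x i).factorial_ne_zero
  rw [eq_div_iff prod_ne_zero, mul_comm]
  exact_mod_cast Nat.multinomial_spec s x

/-- The power series `∑ₖ Xᵏ / k!²`, that is, the modified Bessel function `I₀(2√X)`, whose `d`-th
power generates the numbers `Wstar d n / n!²`. -/
def besselSeries : ℚ⟦X⟧ := .mk fun k => 1 / (k ! : ℚ) ^ 2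

theorem coeff_besselSeries_pow_eq_Wstar_div (d n : ℕ) :
    coeff n (besselSeries ^ d) = Wstar d n / (n ! : ℚ) ^ 2 := by
  rw [← Fin.prod_const, coeff_prod_eq_sum_piAntidiag, piAntidiag_univ_fin_eq_antidiagonalTuple,
    Wstar, Nat.cast_sum, sum_div]
  refine sum_congr rfl fun x hx => ?_
  have sum_eq : ∑ i, x i = n := Finset.Nat.mem_antidiagonalTuple.1 hx
  have factorial_ne_zero : (n ! : ℚ) ≠ 0 := Nat.cast_ne_zero.2 n.factorial_ne_zero
  calc ∏ i, coeff (x i) besselSeries = 1 / (∏ i, ((x i)! : ℚ)) ^ 2 := by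
        simp only [besselSeries, coeff_mk, prod_div_distrib, prod_const_one, prod_pow]
    _ = (Nat.multinomial univ x ^ 2 : ℕ) / (n ! : ℚ) ^ 2 := by
        rw [Nat.cast_pow, cast_multinomial_eq_div, sum_eq]
        field_simp

theorem coeff_besselSeries_pow_eq_W_div (d n : ℕ) :
    coeff n (besselSeries ^ d) = W d n / ((2 * n)! : ℚ) := by
  have choose_eq : ((2 * n).choose n : ℚ) = (2 * n)! / (n ! * n !) := by
    rw [two_mul, Nat.cast_add_choose]
  have factorial_ne_zero (m : ℕ) : (m ! : ℚ) ≠ 0 := Nat.cast_ne_zero.2 m.factorial_ne_zero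
  rw [coeff_besselSeries_pow_eq_Wstar_div, W, Nat.cast_mul, choose_eq]
  field_simp [factorial_ne_zero]

theorem W_sum_div_factorial_eq_sum_prod {ι : Type*} [DecidableEq ι]
    (s : Finset ι) (a : ι → ℕ) (n : ℕ) :
    (W (∑ i ∈ s, a i) n / (2 * n)! : ℚ) =
      ∑ x ∈ piAntidiag s n, ∏ i ∈ s, (W (a i) (x i) / (2 * x i)! : ℚ) := by
  simp only [← coeff_besselSeries_pow_eq_W_div, ← coeff_prod_eq_sum_piAntidiag, prod_pow_eq_pow_sum]

theorem stmt_17_general {ι : Type*} [DecidableEq ι] (s : Finset ι) (a : ι → ℕ) (n : ℕ) :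
    W (∑ i ∈ s, a i) n =
      ∑ x ∈ piAntidiag s n,
        Nat.multinomial s (fun i => 2 * x i) * ∏ i ∈ s, W (a i) (x i) := by
  have factorial_ne_zero : ((2 * n)! : ℚ) ≠ 0 := Nat.cast_ne_zero.2 (2 * n).factorial_ne_zero
  suffices (W (∑ i ∈ s, a i) n : ℚ) = ∑ x ∈ piAntidiag s n,
      (Nat.multinomial s (fun i => 2 * x i) : ℚ) * ∏ i ∈ s, (W (a i) (x i) : ℚ) by
    exact_mod_cast this
  rw [← div_left_inj' factorial_ne_zero, W_sum_div_factorial_eq_sum_prod, sum_div]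
  refine sum_congr rfl fun x hx => ?_
  have sum_eq : ∑ i ∈ s, x i = n := (mem_piAntidiag.1 hx).1
  rw [cast_multinomial_eq_div, ← mul_sum, sum_eq, prod_div_distrib]
  field_simp

theorem stmt_17 (a b n : ℕ) (ha : 0 < a) (hb : 0 < b) (hn : 0 < n) :
    W (a * b) n =
      ∑ x ∈ Finset.Nat.antidiagonalTuple b n,
        Nat.multinomial Finset.univ (fun i => 2 * x i) * ∏ i : Fin b, W a (x i) := by
  simpa only [Fin.sum_const, smul_eq_mul, mul_comm b a, piAntidiag_univ_fin_eq_antidiagonalTuple]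
    using stmt_17_general univ (fun _ : Fin b => a) n
end

section
/- For every nonnegative integer i and every nonnegative integer x, the odd parts of factorials satisfy Θ₂((2^i·(2x + 1))!) = Θ₂((2^{i+1}·x)!) · ∏_{j=1}^{2^i} (2^{i+1−ν₂(j)}·x + Θ₂(j)). -/
/-- `theta2 z` is the odd part of `z`, i.e. `z / 2^(ν₂ z)`. -/
def theta2 (z : ℕ) : ℕ := z / 2 ^ padicValNat 2 z

theorem theta2_eq_ordCompl (z : ℕ) : theta2 z = ordCompl[2] z := by
  rw [theta2, Nat.factorization_def z Nat.prime_two]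

/- Since `ν_p(j) < k`, the `p`-part of `j` divides `p ^ k * x` with a quotient still divisible
by `p`, so it is also the `p`-part of the sum. -/
theorem ordCompl_pow_mul_add {p k j : ℕ} (hp : p.Prime) (hj : j ≠ 0) (hjk : j < p ^ k) (x : ℕ) :
    ordCompl[p] (p ^ k * x + j) = p ^ (k - j.factorization p) * x + ordCompl[p] j := by
  have factorization_lt : j.factorization p < k :=
    (Nat.pow_lt_pow_iff_right hp.one_lt).1 ((Nat.ordProj_le p hj).trans_lt hjk)
  have eq_ordProj_mul :
      p ^ k * x + j = ordProj[p] j * (p ^ (k - j.factorization p) * x + ordCompl[p] j) := by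
    rw [mul_add, Nat.ordProj_mul_ordCompl_eq_self, ← mul_assoc,
      pow_mul_pow_sub p factorization_lt.le]
  have not_dvd_cofactor : ¬p ∣ p ^ (k - j.factorization p) * x + ordCompl[p] j := by
    rw [Nat.dvd_add_right ((dvd_pow_self p (Nat.sub_ne_zero_of_lt factorization_lt)).mul_right x)]
    exact Nat.not_dvd_ordCompl hp hj
  rw [eq_ordProj_mul, Nat.ordCompl_pow_mul_of_not_dvd _ hp not_dvd_cofactor]

theorem stmt_18_general {p k m : ℕ} (hp : p.Prime) (hm : m < p ^ k) (x : ℕ) :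
    ordCompl[p] (Nat.factorial (p ^ k * x + m)) =
      ordCompl[p] (Nat.factorial (p ^ k * x)) *
        ∏ j ∈ Finset.Icc 1 m, (p ^ (k - j.factorization p) * x + ordCompl[p] j) := by
  induction m with
  | zero => simp
  | succ m ih =>
    rw [← add_assoc, Nat.factorial_succ, Nat.ordCompl_mul, ih (by lia), add_assoc,
      ordCompl_pow_mul_add hp m.succ_ne_zero hm, Finset.prod_Icc_succ_top (by lia)]
    ring

theorem stmt_18 (i x : ℕ) :
    theta2 (Nat.factorial (2 ^ i * (2 * x + 1))) =
      theta2 (Nat.factorial (2 ^ (i + 1) * x)) *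
        ∏ j ∈ Finset.Icc 1 (2 ^ i), (2 ^ (i + 1 - padicValNat 2 j) * x + theta2 j) := by
  rw [show 2 ^ i * (2 * x + 1) = 2 ^ (i + 1) * x + 2 ^ i by ring]
  simpa only [theta2_eq_ordCompl, Nat.factorization_def _ Nat.prime_two] using
    stmt_18_general Nat.prime_two (Nat.pow_lt_pow_succ one_lt_two) x
end

section
/- Let p be a prime number. For every nonnegative integer i, every digit a in base p (0 ≤ a ≤ p−1), and every nonnegative integer x, Θ_p((p^i·(p·x + a))!) = Θ_p((p^{i+1}·x)!) · ∏_{j=1}^{a·p^i} (p^{i+1−ν_p(j)}·x + Θ_p(j)). -/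
/-- `thetap p z` is the `p`-free part of `z`, i.e. `z / p^(ν_p z)`. -/
def thetap (p z : ℕ) : ℕ := z / p ^ padicValNat p z

/-! For `0 < j < p ^ k` the valuation `ν_p(j)` is less than `k`, so `p ^ k * x + j` has the same
`p`-adic valuation as `j`, and dividing by that power of `p` gives
`p ^ (k - ν_p(j)) * x + Θ_p(j)`. As `Θ_p` is multiplicative, the product of these identities over
`1 ≤ j ≤ m` computes `Θ_p((p ^ k * x + m)!)` for every `m < p ^ k`; the theorem is the case
`k = i + 1`, `m = a * p ^ i`. -/

theorem pow_padicValNat_mul_thetap (p z : ℕ) : p ^ padicValNat p z * thetap p z = z :=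
  Nat.mul_div_cancel' pow_padicValNat_dvd

section Prime

open Finset
open scoped Nat

variable {p : ℕ} [hp : Fact p.Prime]

theorem thetap_eq_ordCompl (z : ℕ) : thetap p z = ordCompl[p] z := by
  rw [thetap, Nat.factorization_def z hp.out]

theorem thetap_mul (y z : ℕ) : thetap p (y * z) = thetap p y * thetap p z := by
  simp only [thetap_eq_ordCompl, Nat.ordCompl_mul]

theorem not_dvd_thetap {z : ℕ} (hz : z ≠ 0) : ¬p ∣ thetap p z := by
  rw [thetap_eq_ordCompl]
  exact Nat.not_dvd_ordCompl hp.out hz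

theorem thetap_pow_mul_of_not_dvd (v : ℕ) {c : ℕ} (hc : ¬p ∣ c) : thetap p (p ^ v * c) = c := by
  rw [thetap_eq_ordCompl, Nat.ordCompl_pow_mul_of_not_dvd v hp.out hc]

theorem thetap_pow_mul_add {j k : ℕ} (hj : j ≠ 0) (hjk : padicValNat p j < k) (x : ℕ) :
    thetap p (p ^ k * x + j) = p ^ (k - padicValNat p j) * x + thetap p j := by
  have factor : p ^ k * x + j =
      p ^ padicValNat p j * (p ^ (k - padicValNat p j) * x + thetap p j) := by
    rw [mul_add, pow_padicValNat_mul_thetap, ← mul_assoc, pow_mul_pow_sub p hjk.le]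
  have dvd_left : p ∣ p ^ (k - padicValNat p j) * x :=
    (dvd_pow_self p (Nat.sub_ne_zero_of_lt hjk)).mul_right x
  have not_dvd : ¬p ∣ p ^ (k - padicValNat p j) * x + thetap p j := by
    rw [Nat.dvd_add_right dvd_left]
    exact not_dvd_thetap hj
  rw [factor, thetap_pow_mul_of_not_dvd _ not_dvd]

theorem thetap_factorial_add (n m : ℕ) :
    thetap p (n + m)! = thetap p n ! * ∏ j ∈ Icc 1 m, thetap p (n + j) := by
  induction m with
  | zero => simp
  | succ m ih =>
    rw [prod_Icc_succ_top (Nat.le_add_left 1 m), ← mul_assoc, ← ih, ← add_assoc,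
      Nat.factorial_succ, thetap_mul, mul_comm]

theorem stmt_19_general {k m : ℕ} (hm : m < p ^ k) (x : ℕ) :
    thetap p (p ^ k * x + m)! =
      thetap p (p ^ k * x)! * ∏ j ∈ Icc 1 m, (p ^ (k - padicValNat p j) * x + thetap p j) := by
  rw [thetap_factorial_add]
  congr 1
  refine prod_congr rfl fun j hj ↦ ?_
  obtain ⟨one_le_j, j_le_m⟩ := mem_Icc.mp hj
  have hj0 : j ≠ 0 := Nat.one_le_iff_ne_zero.mp one_le_j
  have hjk : padicValNat p j < k :=
    (padicValNat_le_nat_log j).trans_lt (Nat.log_lt_of_lt_pow hj0 (j_le_m.trans_lt hm))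
  exact thetap_pow_mul_add hj0 hjk x

end Prime

theorem stmt_19 (p : ℕ) (hp : p.Prime) (i a x : ℕ) (ha : a ≤ p - 1) :
    thetap p (Nat.factorial (p ^ i * (p * x + a))) =
      thetap p (Nat.factorial (p ^ (i + 1) * x)) *
        ∏ j ∈ Finset.Icc 1 (a * p ^ i), (p ^ (i + 1 - padicValNat p j) * x + thetap p j) := by
  have : Fact p.Prime := ⟨hp⟩
  have ha_lt : a * p ^ i < p ^ (i + 1) := by
    rw [pow_succ']
    exact Nat.mul_lt_mul_of_pos_right (Nat.lt_of_le_pred hp.pos ha) (pow_pos hp.pos i)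
  rw [show p ^ i * (p * x + a) = p ^ (i + 1) * x + a * p ^ i by ring]
  exact stmt_19_general ha_lt x
end
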